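/- arXiv:2301.09104 — 7 statements merged into one kernel-verified Lean document; each statement's English description precedes it below -/
import Mathlib

section
/- Let φ : R_{n+1} → R_n be the K-algebra homomorphism determined by φ(x_i) = x_i for 1 ≤ i ≤ n and φ(x_{n+1}) = x_1. Then the image under φ of the ideal P_n + ⟨x_{n+1} − x_1⟩ of R_{n+1} equals the toppling ideal I_{C_n} of the cycle C_n, i.e. φ(P_n + ⟨x_{n+1} − x_1⟩) = I_{C_n} as ideals of R_n. -/
noncomputable section

open MvPolynomial

/-- Row of the Laplacian matrix of the `n`-cycle on `Fin n`
(vertex `j` of the paper corresponds to index `j-1`). -/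
def cycLap (n : ℕ) [NeZero n] (j : Fin n) : Fin n → ℤ :=
  fun l => if l = j then 2 else if l = j + 1 ∨ j = l + 1 then -1 else 0

/-- The cycle graph `C_n` on `Fin n`. -/
def cycleG (n : ℕ) [NeZero n] : SimpleGraph (Fin n) :=
  SimpleGraph.fromRel (fun i j => j = i + 1)

/-- The lattice ideal of a lattice `L ⊆ ℤ^n` in `K[x_1,…,x_n]`. -/
def latticeIdeal (n : ℕ) (K : Type*) [Field K] (L : Submodule ℤ (Fin n → ℤ)) :
    Ideal (MvPolynomial (Fin n) K) :=
  Ideal.span { f | ∃ u v : Fin n → ℕ,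
    ((fun i => (u i : ℤ)) - fun i => (v i : ℤ)) ∈ L ∧
    f = (∏ i, X i ^ u i) - ∏ i, X i ^ v i }

open Classical in
/-- The exponent vector of the monomial `x^{S → S̄}`: the `i`-th entry is the number
of edges of the cycle joining `i ∈ S` to the complement of `S`. -/
def outVec (n : ℕ) [NeZero n] (S : Set (Fin n)) (i : Fin n) : ℕ :=
  if i ∈ S then (if i + 1 ∈ S then 0 else 1) + (if i - 1 ∈ S then 0 else 1) else 0

/-- The monomial `x^{S → S̄}`. -/
def outMono (n : ℕ) (K : Type*) [NeZero n] [Field K] (S : Set (Fin n)) :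
    MvPolynomial (Fin n) K :=
  ∏ i, X i ^ outVec n S i

open Classical in
/-- `b_V = ∑_{j ∈ V} b_j`, sum of Laplacian rows over a set of vertices. -/
def bPart (n : ℕ) [NeZero n] (S : Set (Fin n)) : Fin n → ℤ :=
  ∑ j : Fin n, if j ∈ S then cycLap n j else 0

/-- The toppling ideal of the parcycle `(C_n, {V_1,…,V_k})`: the lattice ideal of the
lattice generated by the vectors `b_{V_j}`. -/
def topplingPar (n k : ℕ) (K : Type*) [NeZero n] [Field K] (V : Fin k → Set (Fin n)) :
    Ideal (MvPolynomial (Fin n) K) :=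
  latticeIdeal n K (Submodule.span ℤ (Set.range fun j => bPart n (V j)))

/-- `S` is a connected-parset of the parcycle `(C_n, V)`: a union of parts inducing a
connected subgraph of the cycle. -/
def isConnParset (n k : ℕ) [NeZero n] (V : Fin k → Set (Fin n)) (S : Set (Fin n)) : Prop :=
  (∃ T : Set (Fin k), S = ⋃ j ∈ T, V j) ∧ ((cycleG n).induce S).Connected

/-- The `G`-parking function ideal of a parcycle with sink part `V sink`. -/
def gparkIdeal (n k : ℕ) (K : Type*) [NeZero n] [Field K] (V : Fin k → Set (Fin n))
    (sink : Fin k) : Ideal (MvPolynomial (Fin n) K) :=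
  Ideal.span { f | ∃ S : Set (Fin n), isConnParset n k V S ∧ ¬ V sink ⊆ S ∧
    f = outMono n K S }

/-- The index in `Fin (n+1)` of the paper's variable `x_m`, `1 ≤ m ≤ n+1`. -/
def xIdx (n : ℕ) (m : ℕ) : Fin (n + 1) := ⟨(m - 1) % (n + 1), Nat.mod_lt _ (Nat.succ_pos n)⟩

/-- The defining ideal `P_n ⊆ K[x_1,…,x_{n+1}]` of the rational normal curve of degree `n`. -/
def Pideal (n : ℕ) (K : Type*) [Field K] : Ideal (MvPolynomial (Fin (n + 1)) K) :=
  Ideal.span { f | ∃ i j : ℕ, 2 ≤ i ∧ i ≤ j ∧ j ≤ n ∧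
    f = X (xIdx n i) * X (xIdx n j) - X (xIdx n (i - 1)) * X (xIdx n (j + 1)) }

open Classical in
/-- The `λ`-weight of an exponent vector. -/
def wdeg (n : ℕ) (lam : Fin n → ℕ) (u : Fin n →₀ ℕ) : ℕ := ∑ i, lam i * u i

open Classical in
/-- The `λ`-initial form of a polynomial: the sum of its terms of maximal `λ`-weight. -/
def initForm (n : ℕ) (K : Type*) [Field K] (lam : Fin n → ℕ) (f : MvPolynomial (Fin n) K) :
    MvPolynomial (Fin n) K :=
  ∑ u ∈ f.support.filter (fun u => wdeg n lam u = f.support.sup (wdeg n lam)),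
    monomial u (coeff u f)

/-- The `λ`-initial ideal of an ideal. -/
def initIdeal (n : ℕ) (K : Type*) [Field K] (lam : Fin n → ℕ)
    (I : Ideal (MvPolynomial (Fin n) K)) : Ideal (MvPolynomial (Fin n) K) :=
  Ideal.span { g | ∃ f ∈ I, f ≠ 0 ∧ g = initForm n K lam f }

/-- the variable with index taken modulo `n` -/
def Xt (n : ℕ) (K : Type*) [NeZero n] [Field K] (k : ℕ) : MvPolynomial (Fin n) K :=
  X (Fin.ofNat n k)

theorem phi_xIdx (K : Type*) [Field K] (n : ℕ) [NeZero n] (h0 : 0 < n) (m : ℕ) (hm : m ≤ n + 1) :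
    (if h : ((xIdx n m : Fin (n+1)) : ℕ) < n then
      (X ⟨((xIdx n m : Fin (n+1)) : ℕ), h⟩ : MvPolynomial (Fin n) K)
          else X ⟨0, h0⟩) = Xt n K (m - 1) := by
  have h1 : ((xIdx n m : Fin (n+1)) : ℕ) = m - 1 := by
    simp only [xIdx]
    exact Nat.mod_eq_of_lt (by omega)
  unfold Xt
  split_ifs with h
  · congr 1
    ext
    simp only [Fin.val_ofNat, h1]
    rw [Nat.mod_eq_of_lt (by omega)]
  · congr 1
    ext
    simp only [Fin.val_ofNat]
    have : m - 1 = n := by omega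
    simp [this]

theorem phi_map (K : Type*) [Field K] (n : ℕ) [NeZero n] (h0 : 0 < n) :
    Ideal.map
      (MvPolynomial.aeval (R := K)
        (fun l : Fin (n + 1) =>
          if h : (l : ℕ) < n then (X ⟨(l : ℕ), h⟩ : MvPolynomial (Fin n) K)
          else X ⟨0, h0⟩) :
        MvPolynomial (Fin (n + 1)) K →ₐ[K] MvPolynomial (Fin n) K)
      (Pideal n K ⊔ Ideal.span {X (Fin.last n) - X (0 : Fin (n + 1))})
      = Ideal.span {f | ∃ a b : ℕ, 1 ≤ a ∧ a ≤ b ∧ b + 1 ≤ n ∧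
          f = Xt n K a * Xt n K b - Xt n K (a - 1) * Xt n K (b + 1)} := by
  rw [Ideal.map_sup, Pideal, Ideal.map_span, Ideal.map_span, Set.image_singleton]
  have hz : (aeval (R := K)
        (fun l : Fin (n + 1) =>
          if h : (l : ℕ) < n then (X ⟨(l : ℕ), h⟩ : MvPolynomial (Fin n) K)
          else X ⟨0, h0⟩)) (X (Fin.last n) - X (0 : Fin (n + 1))) = 0 := by
    simp [h0]
  rw [hz, Ideal.span_singleton_eq_bot.mpr rfl, sup_bot_eq]
  congr 1
  ext f
  constructor
  · rintro ⟨g, ⟨i, j, hi, hij, hj, rfl⟩, rfl⟩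
    refine ⟨i - 1, j - 1, by omega, by omega, by omega, ?_⟩
    simp only [map_sub, map_mul, aeval_X]
    rw [phi_xIdx K n h0 i (by omega), phi_xIdx K n h0 j (by omega),
      phi_xIdx K n h0 (i - 1) (by omega), phi_xIdx K n h0 (j + 1) (by omega)]
    rw [show j + 1 - 1 = j - 1 + 1 by omega]
  · rintro ⟨a, b, ha, hab, hb, rfl⟩
    refine ⟨_, ⟨a + 1, b + 1, by omega, by omega, by omega, rfl⟩, ?_⟩
    simp only [map_sub, map_mul, aeval_X]
    rw [phi_xIdx K n h0 (a+1) (by omega), phi_xIdx K n h0 (b+1) (by omega),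
      phi_xIdx K n h0 (a + 1 - 1) (by omega),
      phi_xIdx K n h0 (b + 1 + 1) (by omega)]
    simp

theorem cycLap_eq (n : ℕ) [NeZero n] (hn : 3 ≤ n) (j : Fin n) :
    cycLap n j = (Pi.single j 1 - Pi.single (j + 1) 1) - (Pi.single (j - 1) 1 - Pi.single j 1) := by
  have h1 : (1 : Fin n) ≠ 0 := by
    intro h
    have := congrArg Fin.val h
    rw [Fin.val_one', Fin.val_zero, Nat.mod_eq_of_lt (by omega)] at this
    omega
  have h2 : (1 : Fin n) + 1 ≠ 0 := by
    intro h
    have := congrArg Fin.val h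
    rw [Fin.val_add, Fin.val_one', Fin.val_zero, Nat.mod_eq_of_lt (show 1 < n by omega),
      Nat.mod_eq_of_lt (by omega)] at this
    omega
  have h3 : j ≠ j + 1 := by simpa using h1
  have h4 : j ≠ j - 1 := by
    intro h; apply h1; rw [eq_sub_iff_add_eq] at h; simpa using h
  have h5 : j + 1 ≠ j - 1 := by
    intro h; apply h2; rw [eq_sub_iff_add_eq, add_assoc] at h; simpa using h
  ext l
  have h6 : j = l + 1 ↔ l = j - 1 := by
    rw [eq_sub_iff_add_eq]; exact eq_comm
  simp only [cycLap, h6, Pi.sub_apply, Pi.single_apply]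
  by_cases ha : l = j
  · subst ha; simp [h3, h4]
  · by_cases hb : l = j + 1
    · subst hb; simp [h5, h3.symm]
    · by_cases hc : l = j - 1
      · subst hc; simp [h5.symm, h4.symm]
      · simp [ha, hb, hc]

theorem ofNat_succ' (n : ℕ) [NeZero n] (k : ℕ) : Fin.ofNat n (k + 1) = Fin.ofNat n k + 1 := by
  ext
  simp [Fin.val_add]

theorem diff_mem (n : ℕ) [NeZero n] (hn : 3 ≤ n) (k : ℕ) :
    ((Pi.single (Fin.ofNat n k) 1 - Pi.single (Fin.ofNat n (k + 1)) 1)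
      - (Pi.single (Fin.ofNat n 0) 1 - Pi.single (Fin.ofNat n 1) 1) : Fin n → ℤ)
      ∈ Submodule.span ℤ (Set.range (cycLap n)) := by
  induction k with
  | zero => simp
  | succ k ih =>
    have h := Submodule.subset_span (R := ℤ) (Set.mem_range_self (f := cycLap n) (Fin.ofNat n (k+1)))
    rw [cycLap_eq n hn] at h
    have h7 : Fin.ofNat n (k+1) - 1 = Fin.ofNat n k := by rw [ofNat_succ']; simp
    rw [h7, ← ofNat_succ'] at h
    have := add_mem h ih
    convert this using 1
    abel

theorem le_dir (K : Type*) [Field K] (n : ℕ) [NeZero n] (hn : 3 ≤ n) :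
    Ideal.span {f | ∃ a b : ℕ, 1 ≤ a ∧ a ≤ b ∧ b + 1 ≤ n ∧
          f = Xt n K a * Xt n K b - Xt n K (a - 1) * Xt n K (b + 1)} ≤
    latticeIdeal n K (Submodule.span ℤ (Set.range (cycLap n))) := by
  refine Ideal.span_mono ?_
  rintro f ⟨a, b, ha, hab, hb, rfl⟩
  have key : ∀ p q : ℕ, (∏ i, (X i : MvPolynomial (Fin n) K) ^
      ((Pi.single (Fin.ofNat n p) 1 + Pi.single (Fin.ofNat n q) 1 : Fin n → ℕ) i))
      = Xt n K p * Xt n K q := by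
    intro p q
    simp only [Pi.add_apply, pow_add, Finset.prod_mul_distrib]
    simp [Pi.single_apply, Xt, pow_ite, Finset.prod_ite_eq']
  refine ⟨Pi.single (Fin.ofNat n a) 1 + Pi.single (Fin.ofNat n b) 1,
    Pi.single (Fin.ofNat n (a-1)) 1 + Pi.single (Fin.ofNat n (b+1)) 1, ?_, ?_⟩
  · have h := sub_mem (diff_mem n hn b) (diff_mem n hn (a - 1))
    rw [Nat.sub_add_cancel ha] at h
    convert h using 1
    ext i
    simp only [Pi.sub_apply, Pi.add_apply, Pi.single_apply]
    push_cast
    ring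
  · rw [key, key]

theorem shift_rel {Q : Type*} [CommRing Q] (n : ℕ) (x : ℕ → Q)
    (hx : ∀ a b, 1 ≤ a → a ≤ b → b + 1 ≤ n → x a * x b = x (a - 1) * x (b + 1))
    (a b t : ℕ) (hab : a ≤ b) (hta : t ≤ a) (hb : b + t ≤ n) :
    x a * x b = x (a - t) * x (b + t) := by
  induction t with
  | zero => simp
  | succ t ih =>
    rw [ih (by omega) (by omega), hx _ _ (by omega) (by omega) (by omega)]
    congr 1

theorem mul_rel {Q : Type*} [CommRing Q] (n : ℕ) [NeZero n] (y : Fin n → Q)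
    (hx : ∀ a b, 1 ≤ a → a ≤ b → b + 1 ≤ n → y (Fin.ofNat n a) * y (Fin.ofNat n b)
      = y (Fin.ofNat n (a - 1)) * y (Fin.ofNat n (b + 1))) (i j : Fin n) :
    y i * y j = y 0 * y (i + j) := by
  wlog hij : i ≤ j generalizing i j
  · rw [mul_comm, add_comm i j]
    exact this j i (by omega)
  have hi : y i = y (Fin.ofNat n i) := by simp
  have hj : y j = y (Fin.ofNat n j) := by simp
  have hij' : (i : ℕ) ≤ j := hij
  have hjn := j.isLt
  by_cases h : (i : ℕ) + j ≤ n
  · have := shift_rel n (fun k => y (Fin.ofNat n k)) hx i j i hij le_rfl (by omega)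
    rw [hi, hj, this]
    congr 2
    · ext; simp
    · ext; simp [Fin.val_add, add_comm]
  · have := shift_rel n (fun k => y (Fin.ofNat n k)) hx i j (n - j) hij (by omega) (by omega)
    rw [hi, hj, this, mul_comm]
    congr 2
    · ext; simp [show (j : ℕ) + (n - j) = n by omega]
    · ext
      simp only [Fin.val_ofNat, Fin.val_add]
      rw [show (i : ℕ) + j = (i - (n - j)) + n by omega, Nat.add_mod_right]

theorem pow_rel {Q : Type*} [CommRing Q] (n : ℕ) [NeZero n] (y : Fin n → Q)
    (hy : ∀ i j, y i * y j = y 0 * y (i + j)) (a i : Fin n) (k : ℕ) :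
    y a * y i ^ k = y 0 ^ k * y (a + k • i) := by
  induction k with
  | zero => simp
  | succ k ih =>
    rw [pow_succ, ← mul_assoc, ih, mul_assoc, hy, succ_nsmul, add_assoc]
    ring

theorem prod_rel {Q : Type*} [CommRing Q] (n : ℕ) [NeZero n] (y : Fin n → Q)
    (hy : ∀ i j, y i * y j = y 0 * y (i + j)) (a : Fin n) (u : Fin n → ℕ) (s : Finset (Fin n)) :
    y a * ∏ i ∈ s, y i ^ u i = y 0 ^ (∑ i ∈ s, u i) * y (a + ∑ i ∈ s, u i • i) := by
  classical
  induction s using Finset.induction_on with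
  | empty => simp
  | insert j s hj ih =>
    rw [Finset.prod_insert hj, Finset.sum_insert hj, Finset.sum_insert hj, mul_left_comm, ih,
      mul_left_comm, mul_comm (y j ^ u j), pow_rel n y hy, pow_add]
    rw [show a + ∑ i ∈ s, u i • i + u j • j = a + (u j • j + ∑ i ∈ s, u i • i) by abel]
    ring

theorem full_rel {Q : Type*} [CommRing Q] (n : ℕ) [NeZero n] (y : Fin n → Q)
    (hy : ∀ i j, y i * y j = y 0 * y (i + j)) (u : Fin n → ℕ) (hu : ∑ i, u i ≠ 0) :
    ∏ i, y i ^ u i = y 0 ^ (∑ i, u i - 1) * y (∑ i, u i • i) := by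
  classical
  obtain ⟨j, -, hj⟩ := Finset.exists_ne_zero_of_sum_ne_zero hu
  obtain ⟨w, rfl⟩ : ∃ w : Fin n → ℕ, u = Pi.single j 1 + w := by
    refine ⟨u - Pi.single j 1, ?_⟩
    ext i
    by_cases h : i = j
    · subst h; simp; omega
    · simp [h]
  have h := prod_rel n y hy j w Finset.univ
  simp only [Pi.add_apply, pow_add, Finset.prod_mul_distrib, Finset.sum_add_distrib, add_smul]
  simpa [Pi.single_apply, pow_ite, ite_smul] using h

theorem lattice_inv (n : ℕ) [NeZero n] (hn : 3 ≤ n) (w : Fin n → ℤ)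
    (hw : w ∈ Submodule.span ℤ (Set.range (cycLap n))) :
    ∑ i, w i = 0 ∧ ∑ i, w i • i = 0 := by
  induction hw using Submodule.span_induction with
  | mem x h =>
    obtain ⟨j, rfl⟩ := h
    rw [cycLap_eq n hn]
    simp only [Pi.sub_apply, sub_smul, Finset.sum_sub_distrib]
    simp [Pi.single_apply, ite_smul]
  | zero => simp
  | add x y _ _ hx hy =>
    simp [add_smul, Finset.sum_add_distrib, hx.1, hx.2, hy.1, hy.2]
  | smul c x _ hx =>
    simp only [Pi.smul_apply, smul_assoc, ← Finset.smul_sum, hx.1, hx.2, smul_zero, and_self]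

theorem ge_dir (K : Type*) [Field K] (n : ℕ) [NeZero n] (hn : 3 ≤ n) :
    latticeIdeal n K (Submodule.span ℤ (Set.range (cycLap n))) ≤
    Ideal.span {f | ∃ a b : ℕ, 1 ≤ a ∧ a ≤ b ∧ b + 1 ≤ n ∧
          f = Xt n K a * Xt n K b - Xt n K (a - 1) * Xt n K (b + 1)} := by
  refine Ideal.span_le.mpr ?_
  rintro f ⟨u, v, huv, rfl⟩
  obtain ⟨h1, h2⟩ := lattice_inv n hn _ huv
  simp only [Pi.sub_apply, sub_smul, Finset.sum_sub_distrib, sub_eq_zero, natCast_zsmul] at h1 h2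
  have h1' : ∑ i, u i = ∑ i, v i := by exact_mod_cast h1
  set J := Ideal.span {f | ∃ a b : ℕ, 1 ≤ a ∧ a ≤ b ∧ b + 1 ≤ n ∧
          f = Xt n K a * Xt n K b - Xt n K (a - 1) * Xt n K (b + 1)} with hJ
  have hy := mul_rel n (fun i => Ideal.Quotient.mk J (X i)) (by
    intro a b ha hab hb
    simp only [← map_mul]
    rw [Ideal.Quotient.eq]
    exact Ideal.subset_span ⟨a, b, ha, hab, hb, rfl⟩)
  rw [SetLike.mem_coe, ← Ideal.Quotient.eq]
  simp only [map_prod, map_pow]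
  by_cases hu : ∑ i, u i = 0
  · have hv := h1' ▸ hu
    simp only [Finset.sum_eq_zero_iff, Finset.mem_univ, true_implies] at hu hv
    simp [hu, hv]
  · have e1 := full_rel n _ hy u hu
    have e2 := full_rel n _ hy v (h1' ▸ hu)
    rw [e1, e2, h1', h2]

/-- The image under `φ : R_{n+1} → R_n`, `φ(x_i) = x_i` (`i ≤ n`),
`φ(x_{n+1}) = x_1`, of the ideal `P_n + ⟨x_{n+1} - x_1⟩` is the toppling ideal `I_{C_n}`
of the `n`-cycle, i.e. the lattice ideal of the lattice generated by the rows of the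
Laplacian matrix of `C_n`. -/
theorem statement_0 (K : Type*) [Field K] (n : ℕ) [NeZero n] (hn : 3 ≤ n) :
    Ideal.map
      (MvPolynomial.aeval (R := K)
        (fun l : Fin (n + 1) =>
          if h : (l : ℕ) < n then (X ⟨(l : ℕ), h⟩ : MvPolynomial (Fin n) K)
          else X ⟨0, by omega⟩) :
        MvPolynomial (Fin (n + 1)) K →ₐ[K] MvPolynomial (Fin n) K)
      (Pideal n K ⊔ Ideal.span {X (Fin.last n) - X (0 : Fin (n + 1))})
      = latticeIdeal n K (Submodule.span ℤ (Set.range (cycLap n))) := by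
  rw [phi_map K n (by omega)]
  exact le_antisymm (le_dir K n hn) (ge_dir K n hn)
end
end

section
/- The polynomial x_{n+1} − x_1 is a nonzerodivisor on the quotient ring R_{n+1}/P_n; that is, for every f ∈ R_{n+1}, if (x_{n+1} − x_1)·f ∈ P_n then f ∈ P_n. -/
noncomputable section

open MvPolynomial

/-- The class of the variable with (0-based) index `a` in the quotient. -/
def qx (K : Type*) [Field K] (n a : ℕ) : MvPolynomial (Fin (n + 1)) K ⧸ Pideal n K :=
  Ideal.Quotient.mk (Pideal n K) (X (xIdx n (a + 1)))

theorem qx_step (K : Type*) [Field K] (n a b : ℕ) (hab : a + 1 ≤ b) (hb : b + 1 ≤ n) :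
    qx K n (a + 1) * qx K n b = qx K n a * qx K n (b + 1) := by
  unfold qx
  rw [← map_mul, ← map_mul, Ideal.Quotient.eq]
  apply Ideal.subset_span
  exact ⟨a + 2, b + 1, by omega, by omega, by omega, rfl⟩

theorem qx_steps (K : Type*) [Field K] (n k : ℕ) : ∀ a b : ℕ, a + k ≤ b → b + k ≤ n →
    qx K n (a + k) * qx K n b = qx K n a * qx K n (b + k) := by
  induction k with
  | zero => intro a b _ _; rfl
  | succ k ih =>
    intro a b h1 h2
    have e1 := qx_step K n (a + k) b (by omega) (by omega)
    have e2 := ih a (b + 1) (by omega) (by omega)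
    rw [show a + (k + 1) = a + k + 1 by omega, e1, e2, show b + 1 + k = b + (k + 1) by omega]

theorem qx_norm (K : Type*) [Field K] (n a b c : ℕ) (ha : a ≤ n) (hb : b ≤ n) (hc : c ≤ n)
    (h1 : a ≤ c) (h2 : b ≤ c) (h3 : c ≤ a + b) :
    qx K n a * qx K n b = qx K n c * qx K n (a + b - c) := by
  rcases le_total a b with h | h
  · have := qx_steps K n (c - b) (a + b - c) b (by omega) (by omega)
    rw [show a + b - c + (c - b) = a by omega, show b + (c - b) = c by omega] at this
    rw [this, mul_comm]
  · have := qx_steps K n (c - a) (a + b - c) a (by omega) (by omega)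
    rw [show a + b - c + (c - a) = b by omega, show a + (c - a) = c by omega] at this
    rw [mul_comm, this, mul_comm]

/-- The normal form of monomials of degree `d` and weight `w`. -/
def qN (K : Type*) [Field K] (n : ℕ) : ℕ → ℕ → MvPolynomial (Fin (n + 1)) K ⧸ Pideal n K
  | 0, _ => 1
  | d + 1, w => qx K n (min w n) * qN K n d (w - min w n)

theorem qN_mul (K : Type*) [Field K] (n d : ℕ) : ∀ w a : ℕ, w ≤ d * n → a ≤ n →
    qx K n a * qN K n d w = qN K n (d + 1) (w + a) := by
  induction d with
  | zero =>
    intro w a hw ha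
    have : w = 0 := by simpa using hw
    subst this
    simp [qN, ha]
  | succ d ih =>
    intro w a hw ha
    have hw' : w ≤ d * n + n := by simpa [Nat.succ_mul] using hw
    rw [qN, qN, ← mul_assoc, qx_norm K n a (min w n) (min (w + a) n) ha (by omega) (by omega)
      (by omega) (by omega) (by omega), mul_assoc, ih _ _ (by omega) (by omega)]
    congr 2
    omega

/-- The parametrisation `x_i ↦ s t^i`. -/
def phiMap (K : Type*) [Field K] (n : ℕ) :
    MvPolynomial (Fin (n + 1)) K →ₐ[K] MvPolynomial (Fin 2) K :=
  aeval (fun i => X 0 * X 1 ^ (i : ℕ))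

/-- The linear section sending `s^d t^w` to the normal form. -/
def secMap (K : Type*) [Field K] (n : ℕ) :
    MvPolynomial (Fin 2) K →ₗ[K] (MvPolynomial (Fin (n + 1)) K ⧸ Pideal n K) :=
  (basisMonomials (Fin 2) K).constr K (fun m => qN K n (m 0) (m 1))

theorem secMap_apply (K : Type*) [Field K] (n d w : ℕ) (a : K) :
    secMap K n (C a * (X 0 ^ d * X 1 ^ w)) = a • qN K n d w := by
  have h : (C a * (X 0 ^ d * X 1 ^ w) : MvPolynomial (Fin 2) K)
      = a • (basisMonomials (Fin 2) K) (Finsupp.single 0 d + Finsupp.single 1 w) := by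
    simp [X_pow_eq_monomial, C_mul_monomial, monomial_mul, smul_monomial]
  rw [h, map_smul, secMap, Module.Basis.constr_basis]
  simp

theorem mono_claim (K : Type*) [Field K] (n : ℕ) (u : Fin (n + 1) →₀ ℕ) (a : K) :
    ∃ (c : K) (d w : ℕ), w ≤ d * n ∧ phiMap K n (monomial u a) = C c * (X 0 ^ d * X 1 ^ w) ∧
      Ideal.Quotient.mk (Pideal n K) (monomial u a) = c • qN K n d w := by
  refine induction_on_monomial (motive := fun p => ∃ (c : K) (d w : ℕ), w ≤ d * n ∧
    phiMap K n p = C c * (X 0 ^ d * X 1 ^ w) ∧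
      Ideal.Quotient.mk (Pideal n K) p = c • qN K n d w) ?_ ?_ u a
  · intro a
    refine ⟨a, 0, 0, by simp, by simp [phiMap, algebraMap_eq], ?_⟩
    rw [qN, ← Algebra.algebraMap_eq_smul_one]
    rfl
  · rintro p i ⟨c, d, w, h1, h2, h3⟩
    have hi : (i : ℕ) ≤ n := by omega
    refine ⟨c, d + 1, w + i, ?_, ?_, ?_⟩
    · rw [Nat.succ_mul]; omega
    · rw [map_mul, h2]
      simp only [phiMap, aeval_X]
      ring
    · rw [map_mul, h3, ← qN_mul K n d w i h1 hi, smul_mul_assoc, mul_comm]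
      congr 2
      unfold qx
      congr 2
      ext
      simp [xIdx, Nat.mod_eq_of_lt i.2]

theorem sec_phi (K : Type*) [Field K] (n : ℕ) (f : MvPolynomial (Fin (n + 1)) K) :
    secMap K n (phiMap K n f) = Ideal.Quotient.mk (Pideal n K) f := by
  induction f using MvPolynomial.induction_on' with
  | monomial u a =>
    obtain ⟨c, d, w, _, h2, h3⟩ := mono_claim K n u a
    rw [h2, h3, secMap_apply]
  | add p q hp hq => rw [map_add, map_add, hp, hq, map_add]

theorem phi_Pideal (K : Type*) [Field K] (n : ℕ) (f : MvPolynomial (Fin (n + 1)) K)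
    (hf : f ∈ Pideal n K) : phiMap K n f = 0 := by
  have : Pideal n K ≤ RingHom.ker (phiMap K n) := by
    refine Ideal.span_le.2 ?_
    rintro f ⟨i, j, h1, h2, h3, rfl⟩
    obtain ⟨i, rfl⟩ := Nat.exists_eq_add_of_le' h1
    obtain ⟨j, rfl⟩ := Nat.exists_eq_add_of_le' (by omega : 1 ≤ j)
    simp only [SetLike.mem_coe, RingHom.mem_ker, map_sub, map_mul, phiMap, aeval_X, xIdx]
    rw [Nat.mod_eq_of_lt (by omega), Nat.mod_eq_of_lt (by omega), Nat.mod_eq_of_lt (by omega),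
      Nat.mod_eq_of_lt (by omega)]
    simp only [Nat.add_sub_cancel, show i + 2 - 1 = i + 1 by omega]
    ring
  exact this hf

/-- `x_{n+1} - x_1` is a nonzerodivisor on `R_{n+1}/P_n`. -/
theorem statement_1 (K : Type*) [Field K] (n : ℕ) (hn : 2 ≤ n) :
    ∀ f : MvPolynomial (Fin (n + 1)) K,
      (X (Fin.last n) - X (0 : Fin (n + 1))) * f ∈ Pideal n K → f ∈ Pideal n K := by
  intro f hf
  have h := phi_Pideal K n _ hf
  rw [map_mul] at h
  rcases mul_eq_zero.1 h with h | h
  · exfalso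
    have h' := congrArg (aeval (fun i : Fin 2 => if i = 0 then (1 : K) else 0)) h
    simp [phiMap, show n ≠ 0 by omega] at h'
  · rw [← Ideal.Quotient.eq_zero_iff_mem, ← sec_phi, h, map_zero]
end
end

section
/- Let (C_n,Π) be a parcycle with Π = {V_1,…,V_k}, k ≥ 2, such that |V_i| ≥ 2 for some i. Then the matrix A_{(C_n,Π)} is 1-generic: for every (c_1,c_2) ∈ K² with (c_1,c_2) ≠ (0,0) and every (a_1,…,a_k) ∈ K^k, if Σ_{i=1}^k a_i (c_1 A_{1,i} + c_2 A_{2,i}) = 0 in R_n, then a_i = 0 for all i (equivalently, every generalized entry of A_{(C_n,Π)} is nonzero). -/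
noncomputable section

open MvPolynomial

/-- For a parcycle `(C_n, Π)` with some part of size at least two, the
associated `2 × k` matrix `A_{(C_n,Π)}` (columns given by the directed relevant edges
`(p_i, q_i)` in traversal order starting at a vertex of the sink part) is `1`-generic. -/
theorem statement_3 (K : Type*) [Field K] (n k : ℕ) [NeZero n] (hn : 3 ≤ n) (hk : 2 ≤ k)
    (V : Fin k → Set (Fin n))
    (hcover : ∀ x : Fin n, ∃ j, x ∈ V j)
    (hdisj : ∀ j₁ j₂ : Fin k, j₁ ≠ j₂ → Disjoint (V j₁) (V j₂))
    (hconn : ∀ j, ((cycleG n).induce (V j)).Connected)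
    (hsink : (⟨n - 1, by omega⟩ : Fin n) ∈ V ⟨k - 1, by omega⟩)
    (hbig : ∃ j, (V j).Nontrivial)
    (p q : Fin k → Fin n)
    (hpq : ∀ c, q c = p c + 1)
    (hcross : ∀ c j, p c ∈ V j → q c ∉ V j)
    (hall : ∀ x : Fin n, (∃ j, x ∈ V j ∧ x + 1 ∉ V j) → ∃ c, p c = x)
    (hinjp : Function.Injective p)
    (horder : ∃ v₀, v₀ ∈ V ⟨k - 1, by omega⟩ ∧
      StrictMono fun c : Fin k => ((p c - v₀ : Fin n) : ℕ)) :
    ∀ c₁ c₂ : K, (c₁, c₂) ≠ (0, 0) → ∀ a : Fin k → K,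
      (∑ i, C (a i) * (C c₁ * X (p i) + C c₂ * X (q i)) : MvPolynomial (Fin n) K) = 0 →
      ∀ i, a i = 0 := by
  classical
  intro c₁ c₂ hc a hsum
  -- some vertex is not the tail of a relevant edge
  have hx0 : ∃ x₀ : Fin n, ∀ c, p c ≠ x₀ := by
    obtain ⟨j, u, hu, v, hv, huv⟩ := hbig
    have hne : (⟨u, hu⟩ : V j) ≠ ⟨v, hv⟩ := fun h => huv (congrArg Subtype.val h)
    haveI : Nontrivial (V j) := ⟨_, _, hne⟩
    obtain ⟨w, hw⟩ := (hconn j).preconnected.exists_adj_of_nontrivial ⟨u, hu⟩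
    have hw' : (cycleG n).Adj u w := hw
    rw [cycleG, SimpleGraph.fromRel_adj] at hw'
    rcases hw'.2 with h | h
    · refine ⟨u, fun c hcu => hcross c j (hcu ▸ hu) ?_⟩
      rw [hpq, hcu, ← h]
      exact w.2
    · refine ⟨w, fun c hcu => hcross c j (hcu ▸ w.2) ?_⟩
      rw [hpq, hcu, ← h]
      exact hu
  obtain ⟨x₀, hx₀⟩ := hx0
  let b : Fin n → K := fun x => ∑ i, if p i = x then a i else 0
  have hbp : ∀ i, b (p i) = a i := by
    intro i
    simp [b, hinjp.eq_iff]
  have hb0 : b x₀ = 0 := by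
    simp [b, hx₀]
  have hrec : ∀ x, c₁ * b (x + 1) + c₂ * b x = 0 := by
    intro x
    have h := congrArg (coeff (Finsupp.single (x + 1) 1)) hsum
    simp only [coeff_sum, coeff_C_mul, coeff_add, coeff_zero, coeff_X', hpq,
      Finsupp.single_left_inj one_ne_zero, add_left_inj] at h
    rw [← h]
    simp only [b, Finset.mul_sum, ← Finset.sum_add_distrib]
    refine Finset.sum_congr rfl fun i _ => ?_
    split_ifs <;> ring
  have hb : ∀ x, b x = 0 := by
    by_cases h1 : c₁ = 0
    · have h2 : c₂ ≠ 0 := by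
        rintro rfl
        exact hc (by rw [h1])
      intro x
      have := hrec x
      simpa [h1, h2] using this
    · have key : ∀ m : ℕ, b (x₀ + Fin.ofNat n m) = 0 := by
        intro m
        induction m with
        | zero => simpa using hb0
        | succ m ih =>
          have h := hrec (x₀ + Fin.ofNat n m)
          rw [ih] at h
          have e : x₀ + Fin.ofNat n (m + 1) = x₀ + Fin.ofNat n m + 1 := by
            rw [add_assoc]
            congr 1
            apply Fin.ext
            simp [Fin.val_add]
          rw [e]
          simpa [h1] using h
      intro x
      have h := key (x - x₀).val
      rw [Fin.ofNat_val_eq_self] at h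
      have e : x₀ + (x - x₀) = x := by
        open Fin.CommRing in
        ring
      rwa [e] at h
  intro i
  rw [← hbp i, hb]
end
end

section
/- Let (C_n,Π) be a parcycle with Π = {V_1,…,V_k}, k ≥ 2, sink V_k, and A = A_{(C_n,Π)}. For every connected-parset S of (C_n,Π) not containing V_k there is a unique pair of column indices i < j of A such that x^{S→S̄} − x^{S̄→S} = −(A_{1,i}A_{2,j} − A_{1,j}A_{2,i}), and the resulting assignment is a bijection from the set of connected-parsets of (C_n,Π) not containing V_k onto the set of 2-element subsets {i,j} of column indices of A; in particular the binomials x^{S→S̄} − x^{S̄→S} are in bijection with the 2×2 minors of A. -/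
noncomputable section

open MvPolynomial

/-- abstract coordinate on the cycle starting at `v₀`. -/
structure IsCoord (n : ℕ) [NeZero n] (r : Fin n → ℕ) : Prop where
  inj : ∀ x y, r x = r y → x = y
  lt : ∀ x, r x < n
  succ : ∀ x, r (x + 1) = if r x + 1 = n then 0 else r x + 1
  surj : ∀ m, m < n → ∃ x, r x = m

lemma coord_exists (n : ℕ) [NeZero n] (hn : 3 ≤ n) (v : Fin n) :
    IsCoord n (fun x => ((x - v : Fin n) : ℕ)) where
  inj x y h := sub_left_injective (Fin.ext h)
  lt x := (x - v).2
  succ x := by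
    have h : x + 1 - v = (x - v) + 1 := by abel
    show ((x + 1 - v : Fin n) : ℕ) = _
    rw [h, Fin.val_add]
    have h1 : ((1 : Fin n) : ℕ) = 1 := by
      rw [Fin.val_one']; exact Nat.mod_eq_of_lt (by omega)
    rw [h1]
    have := (x - v).2
    split_ifs with h2
    · rw [h2]; exact Nat.mod_self n
    · exact Nat.mod_eq_of_lt (by omega)
  surj m hm := ⟨⟨m, hm⟩ + v, by simp⟩

lemma conn_inv (n : ℕ) [NeZero n] (W P : Set (Fin n))
    (hW : ((cycleG n).induce W).Preconnected)
    (h : ∀ x ∈ W, x + 1 ∈ W → (x ∈ P ↔ x + 1 ∈ P)) (x y : Fin n) (hx : x ∈ W) (hy : y ∈ W)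
    (hxP : x ∈ P) : y ∈ P := by
  obtain ⟨w⟩ := hW ⟨x, hx⟩ ⟨y, hy⟩
  have key : ∀ (a b : W), ((cycleG n).induce W).Walk a b → (a : Fin n) ∈ P → (b : Fin n) ∈ P := by
    intro a b w
    induction w with
    | nil => exact id
    | @cons u v w3 hab w2 ih =>
      intro hu
      apply ih
      have hab' : (cycleG n).Adj u v := hab
      rw [cycleG, SimpleGraph.fromRel_adj] at hab'
      rcases hab'.2 with h1 | h1
      · have := h u u.2 (h1 ▸ v.2)
        rw [h1]; exact this.1 hu
      · have := h v v.2 (h1 ▸ u.2)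
        rw [h1] at hu; exact this.2 hu
  exact key _ _ w hxP

lemma outMono_eq (n : ℕ) (K : Type*) [NeZero n] [Field K] (S : Set (Fin n)) (a b : Fin n)
    (ha : ∀ x, (x ∉ S ∧ x + 1 ∈ S) ↔ x = a) (hb : ∀ x, (x ∈ S ∧ x + 1 ∉ S) ↔ x = b) :
    outMono n K S = X (a + 1) * X b := by
  classical
  have key : ∀ i, outVec n S i = (if i = a + 1 then 1 else 0) + (if i = b then 1 else 0) := by
    intro i
    have h1 := ha (i - 1)
    have h2 := hb i
    rw [sub_add_cancel, sub_eq_iff_eq_add] at h1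
    simp only [← h1, ← h2, outVec]
    by_cases hi : i ∈ S <;> by_cases hi1 : i + 1 ∈ S <;> by_cases hi2 : i - 1 ∈ S <;>
      simp [hi, hi1, hi2]
  rw [outMono]
  simp_rw [key, pow_add, Finset.prod_mul_distrib, pow_ite, pow_one, pow_zero]
  simp

lemma binom_inj {σ : Type*} (K : Type*) [Field K] (a b c d a' b' c' d' : σ)
    (hne : ¬ ((a = c ∧ b = d) ∨ (a = d ∧ b = c)))
    (h : (X a * X b - X c * X d : MvPolynomial σ K) = X a' * X b' - X c' * X d') :
    (((a = a' ∧ b = b') ∨ (a = b' ∧ b = a')) ∧ ((c = c' ∧ d = d') ∨ (c = d' ∧ d = c'))) ∨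
    (((a = c' ∧ b = d') ∨ (a = d' ∧ b = c')) ∧ ((c = a' ∧ d = b') ∨ (c = b' ∧ d = a'))) := by
  classical
  have hm : ∀ i j : σ, (X i * X j : MvPolynomial σ K)
      = monomial (Finsupp.single i 1 + Finsupp.single j 1) 1 := by
    intro i j; simp [X, monomial_mul]
  have hs : ∀ i j k l : σ, (Finsupp.single i 1 + Finsupp.single j 1 : σ →₀ ℕ)
      = Finsupp.single k 1 + Finsupp.single l 1 ↔ ((i = k ∧ j = l) ∨ (i = l ∧ j = k)) := by
    intro i j k l
    rw [Finsupp.single_add_single_eq_single_add_single (by norm_num) (by norm_num)]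
    simp
  simp only [hm] at h
  simp only [← hs] at hne ⊢
  generalize (Finsupp.single a 1 + Finsupp.single b 1 : σ →₀ ℕ) = u1 at *
  generalize (Finsupp.single c 1 + Finsupp.single d 1 : σ →₀ ℕ) = u2 at *
  generalize (Finsupp.single a' 1 + Finsupp.single b' 1 : σ →₀ ℕ) = u3 at *
  generalize (Finsupp.single c' 1 + Finsupp.single d' 1 : σ →₀ ℕ) = u4 at *
  by_cases h13 : u1 = u3
  · left
    refine ⟨h13, ?_⟩
    subst h13
    have h2 := congrArg (coeff u2) (sub_right_injective h)
    by_contra h24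
    simp [coeff_monomial, Ne.symm h24] at h2
  · right
    have h1 := congrArg (coeff u1) h
    have h2 := congrArg (coeff u2) h
    have h14 : u1 = u4 := by
      by_contra h14
      simp [coeff_monomial, Ne.symm hne, Ne.symm h13, Ne.symm h14] at h1
    refine ⟨h14, ?_⟩
    subst h14
    by_contra h23
    simp [coeff_monomial, hne, Ne.symm h23] at h2

lemma interval_edges (n : ℕ) [NeZero n] (r : Fin n → ℕ) (hr : IsCoord n r) (a b : Fin n)
    (hab : r a < r b) :
    (∀ x, (x ∉ {y | r a < r y ∧ r y ≤ r b} ∧ x + 1 ∈ {y | r a < r y ∧ r y ≤ r b}) ↔ x = a) ∧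
    (∀ x, (x ∈ {y | r a < r y ∧ r y ≤ r b} ∧ x + 1 ∉ {y | r a < r y ∧ r y ≤ r b}) ↔ x = b) := by
  have hb := hr.lt b
  constructor
  all_goals
    intro x
    have hx := hr.lt x
    have := hr.succ x
    constructor
    · intro h
      apply hr.inj
      simp only [Set.mem_ofPred_eq] at h
      split_ifs at this <;> omega
    · rintro rfl
      simp only [Set.mem_ofPred_eq]
      split_ifs at this <;> omega

lemma interval_binom (n : ℕ) (K : Type*) [NeZero n] [Field K] (r : Fin n → ℕ)
    (hr : IsCoord n r) (a b : Fin n) (hab : r a < r b) :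
    outMono n K {y | r a < r y ∧ r y ≤ r b} - outMono n K {y | r a < r y ∧ r y ≤ r b}ᶜ
      = X (a + 1) * X b - X (b + 1) * X a := by
  obtain ⟨h1, h2⟩ := interval_edges n r hr a b hab
  rw [outMono_eq n K _ a b h1 h2, outMono_eq n K _ b a]
  · intro x; rw [← h2 x]; simp only [Set.mem_compl_iff, not_not]
  · intro x; rw [← h1 x]; simp only [Set.mem_compl_iff, not_not]

lemma interval_conn (n : ℕ) [NeZero n] (hn : 3 ≤ n) (r : Fin n → ℕ) (hr : IsCoord n r)
    (a b : Fin n) (hab : r a < r b) :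
    ((cycleG n).induce {y | r a < r y ∧ r y ≤ r b}).Connected := by
  have hb := hr.lt b
  have hs : r (a + 1) = r a + 1 := by
    rw [hr.succ, if_neg (by omega)]
  have h0 : a + 1 ∈ {y | r a < r y ∧ r y ≤ r b} := by
    simp only [Set.mem_ofPred_eq]; omega
  have key : ∀ m (x : Fin n) (hx : x ∈ {y | r a < r y ∧ r y ≤ r b}), r x = r a + 1 + m →
      ((cycleG n).induce {y | r a < r y ∧ r y ≤ r b}).Reachable ⟨a + 1, h0⟩ ⟨x, hx⟩ := by
    intro m
    induction m with
    | zero =>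
      intro x hx hm
      have : x = a + 1 := hr.inj _ _ (by omega)
      subst this
      exact SimpleGraph.Reachable.refl _
    | succ m ih =>
      intro x hx hm
      simp only [Set.mem_ofPred_eq] at hx
      obtain ⟨y, hy⟩ := hr.surj (r a + 1 + m) (by omega)
      have hyS : y ∈ {y | r a < r y ∧ r y ≤ r b} := by simp only [Set.mem_ofPred_eq]; omega
      have hxy : x = y + 1 := by
        apply hr.inj
        rw [hr.succ, if_neg (by omega)]; omega
      refine (ih y hyS hy).trans (SimpleGraph.Adj.reachable ?_)
      show (cycleG n).Adj y x
      rw [cycleG, SimpleGraph.fromRel_adj]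
      refine ⟨?_, Or.inl hxy⟩
      rintro rfl
      omega
  rw [SimpleGraph.connected_iff_exists_forall_reachable]
  refine ⟨⟨a + 1, h0⟩, ?_⟩
  rintro ⟨x, hx⟩
  exact key (r x - (r a + 1)) x hx (by have := hx.1; omega)

lemma conn_interval (n : ℕ) [NeZero n] (r : Fin n → ℕ) (hr : IsCoord n r) (S : Set (Fin n))
    (hS : ((cycleG n).induce S).Connected) (h0 : ∀ x ∈ S, r x ≠ 0) :
    ∃ a b, r a < r b ∧ S = {y | r a < r y ∧ r y ≤ r b} := by
  obtain ⟨⟨z, hz⟩⟩ := hS.nonempty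
  obtain ⟨l, hl, hlmin⟩ := Set.exists_min_image S r (Set.toFinite S) ⟨z, hz⟩
  obtain ⟨b, hb, hbmax⟩ := Set.exists_max_image S r (Set.toFinite S) ⟨z, hz⟩
  have hl0 := h0 l hl
  have hlb := hlmin b hb
  obtain ⟨a, ha⟩ := hr.surj (r l - 1) (by have := hr.lt l; omega)
  refine ⟨a, b, by omega, ?_⟩
  ext y
  simp only [Set.mem_ofPred_eq]
  constructor
  · intro hy
    have := hlmin y hy
    exact ⟨by omega, hbmax y hy⟩
  · rintro ⟨h1, h2⟩
    by_contra hy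
    have hly : r l ≠ r y := fun h => hy (hr.inj _ _ h ▸ hl)
    have := conn_inv n S {x | r x < r y} hS.preconnected (by
      intro x hx hx1
      have e := hr.succ x
      have e0 := h0 _ hx1
      rw [e] at e0
      have hne : r (x + 1) ≠ r y := fun h => hy (hr.inj _ _ h ▸ hx1)
      simp only [Set.mem_ofPred_eq]
      split_ifs at e e0 <;> omega) l b hl hb (by simp only [Set.mem_ofPred_eq]; omega)
    simp only [Set.mem_ofPred_eq] at this
    omega

lemma pair_inj (n : ℕ) (K : Type*) [NeZero n] [Field K] (hn : 3 ≤ n) (r : Fin n → ℕ)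
    (hr : IsCoord n r) (a b a' b' : Fin n) (hab : r a < r b) (hab' : r a' < r b')
    (h : (X (a + 1) * X b - X (b + 1) * X a : MvPolynomial (Fin n) K)
      = X (a' + 1) * X b' - X (b' + 1) * X a') : a = a' ∧ b = b' := by
  have e : ∀ x y, x = y ↔ r x = r y := fun x y => ⟨fun h => h ▸ rfl, hr.inj x y⟩
  have h1 := hr.succ a
  have h2 := hr.succ b
  have h3 := hr.succ a'
  have h4 := hr.succ b'
  have l1 := hr.lt a
  have l2 := hr.lt b
  have l3 := hr.lt a'
  have l4 := hr.lt b'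
  rw [if_neg (by omega)] at h1 h3
  have := binom_inj K _ _ _ _ _ _ _ _ (by
    simp only [e]
    split_ifs at h2 <;> omega) h
  simp only [e] at this ⊢
  split_ifs at h2 h4 <;> omega

/-- For a parcycle `(C_n, Π)` with matrix `A = A_{(C_n,Π)}` (columns the
directed relevant edges `(p_i, q_i)` in traversal order), the binomials
`x^{S→S̄} - x^{S̄→S}` attached to connected-parsets `S` avoiding the sink are in bijection
with the `2 × 2` minors of `A`: each such `S` determines a unique pair of columns `i < j`
with `x^{S→S̄} - x^{S̄→S} = -(A₁ᵢA₂ⱼ - A₁ⱼA₂ᵢ)`, and conversely. -/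
theorem statement_4 (K : Type*) [Field K] (n k : ℕ) [NeZero n] (hn : 3 ≤ n) (hk : 2 ≤ k)
    (V : Fin k → Set (Fin n))
    (hcover : ∀ x : Fin n, ∃ j, x ∈ V j)
    (hdisj : ∀ j₁ j₂ : Fin k, j₁ ≠ j₂ → Disjoint (V j₁) (V j₂))
    (hconn : ∀ j, ((cycleG n).induce (V j)).Connected)
    (hsink : (⟨n - 1, by omega⟩ : Fin n) ∈ V ⟨k - 1, by omega⟩)
    (p q : Fin k → Fin n)
    (hpq : ∀ c, q c = p c + 1)
    (hcross : ∀ c j, p c ∈ V j → q c ∉ V j)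
    (hall : ∀ x : Fin n, (∃ j, x ∈ V j ∧ x + 1 ∉ V j) → ∃ c, p c = x)
    (hinjp : Function.Injective p)
    (horder : ∃ v₀, v₀ ∈ V ⟨k - 1, by omega⟩ ∧
      StrictMono fun c : Fin k => ((p c - v₀ : Fin n) : ℕ)) :
    (∀ S : Set (Fin n), isConnParset n k V S → ¬ V ⟨k - 1, by omega⟩ ⊆ S →
      ∃! cc : Fin k × Fin k, cc.1 < cc.2 ∧
        outMono n K S - outMono n K Sᶜ
          = -(X (p cc.1) * X (q cc.2) - X (p cc.2) * X (q cc.1))) ∧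
    (∀ c₁ c₂ : Fin k, c₁ < c₂ →
      ∃! S : Set (Fin n), (isConnParset n k V S ∧ ¬ V ⟨k - 1, by omega⟩ ⊆ S) ∧
        outMono n K S - outMono n K Sᶜ
          = -(X (p c₁) * X (q c₂) - X (p c₂) * X (q c₁))) := by
  obtain ⟨v₀, hv₀, hmono⟩ := horder
  have hr := coord_exists n hn v₀
  have hr0 : ∀ x : Fin n, ((x - v₀ : Fin n) : ℕ) = 0 → x = v₀ := by
    intro x hx
    exact hr.inj _ _ (by simpa using hx)
  generalize hrdef : (fun x : Fin n => ((x - v₀ : Fin n) : ℕ)) = r at hr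
  have hrx : ∀ x : Fin n, ((x - v₀ : Fin n) : ℕ) = r x := fun x => congrFun hrdef x
  simp only [hrx] at hmono hr0
  have hlt : ∀ c d : Fin k, r (p c) < r (p d) ↔ c < d := fun c d => hmono.lt_iff_lt
  -- parsets
  have hpar : ∀ S, (∃ T : Set (Fin k), S = ⋃ j ∈ T, V j) → ∀ x ∈ S, ∀ j, x ∈ V j → V j ⊆ S := by
    rintro S ⟨T, rfl⟩ x hx j hj
    simp only [Set.mem_iUnion] at hx
    obtain ⟨i, hi, hxi⟩ := hx
    have : i = j := by
      by_contra hij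
      exact Set.disjoint_left.1 (hdisj i j hij) hxi hj
    subst this
    exact Set.subset_biUnion_of_mem (u := V) hi
  have hfwd : ∀ S : Set (Fin n), isConnParset n k V S → ¬ V ⟨k - 1, by omega⟩ ⊆ S →
      ∃ c d, c < d ∧ S = {y | r (p c) < r y ∧ r y ≤ r (p d)} := by
    rintro S ⟨hT, hS⟩ hns
    obtain ⟨a, b, hab, hSe⟩ := conn_interval n r hr S hS (by
      intro x hx hx0
      have := hr0 x hx0
      subst this
      exact hns (hpar S hT x hx _ hv₀))
    obtain ⟨e1, e2⟩ := interval_edges n r hr a b hab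
    rw [← hSe] at e1 e2
    obtain ⟨ha1, ha2⟩ := (e1 a).2 rfl
    obtain ⟨hb1, hb2⟩ := (e2 b).2 rfl
    obtain ⟨c, rfl⟩ := hall a (by
      obtain ⟨j, hj⟩ := hcover a
      exact ⟨j, hj, fun h => ha1 (hpar S hT _ ha2 j h hj)⟩)
    obtain ⟨d, rfl⟩ := hall b (by
      obtain ⟨j, hj⟩ := hcover b
      exact ⟨j, hj, fun h => hb2 (hpar S hT _ hb1 j hj h)⟩)
    exact ⟨c, d, (hlt c d).1 hab, hSe⟩
  have hbwd : ∀ c d : Fin k, c < d → isConnParset n k V {y | r (p c) < r y ∧ r y ≤ r (p d)} ∧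
      ¬ V ⟨k - 1, by omega⟩ ⊆ {y | r (p c) < r y ∧ r y ≤ r (p d)} := by
    intro c d hcd
    have hab := (hlt c d).2 hcd
    obtain ⟨e1, e2⟩ := interval_edges n r hr _ _ hab
    refine ⟨⟨⟨{j | V j ⊆ {y | r (p c) < r y ∧ r y ≤ r (p d)}}, ?_⟩,
      interval_conn n hn r hr _ _ hab⟩, ?_⟩
    · apply Set.Subset.antisymm
      · intro x hx
        obtain ⟨j, hj⟩ := hcover x
        refine Set.mem_biUnion (x := j) ?_ hj
        intro y hy
        refine conn_inv n (V j) _ (hconn j).preconnected ?_ x y hj hy hx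
        intro z hz hz1
        by_contra hcon
        have : z = p c ∨ z = p d := by
          rw [← e1 z, ← e2 z]; tauto
        rcases this with rfl | rfl
        · exact hcross c j hz (hpq c ▸ hz1)
        · exact hcross d j hz (hpq d ▸ hz1)
      · exact Set.iUnion₂_subset fun j hj => hj
    · intro h
      have h1 := (h hv₀).1
      have : r v₀ = 0 := by rw [← hrx]; simp
      omega
  have hbin : ∀ c d : Fin k, c < d →
      outMono n K {y | r (p c) < r y ∧ r y ≤ r (p d)}
        - outMono n K {y | r (p c) < r y ∧ r y ≤ r (p d)}ᶜ
      = -(X (p c) * X (q d) - X (p d) * X (q c)) := by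
    intro c d hcd
    rw [interval_binom n K r hr _ _ ((hlt c d).2 hcd), hpq, hpq]
    ring
  have hinj : ∀ c d c' d' : Fin k, c < d → c' < d' →
      (-(X (p c) * X (q d) - X (p d) * X (q c)) : MvPolynomial (Fin n) K)
        = -(X (p c') * X (q d') - X (p d') * X (q c')) → c = c' ∧ d = d' := by
    intro c d c' d' h1 h2 h
    have := pair_inj n K hn r hr (p c) (p d) (p c') (p d') ((hlt _ _).2 h1) ((hlt _ _).2 h2) (by
      rw [hpq, hpq, hpq, hpq] at h
      linear_combination h)
    exact ⟨hinjp this.1, hinjp this.2⟩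
  constructor
  · intro S hS hns
    obtain ⟨c, d, hcd, rfl⟩ := hfwd S hS hns
    refine ⟨(c, d), ⟨hcd, hbin c d hcd⟩, ?_⟩
    rintro ⟨c', d'⟩ ⟨hcd', h⟩
    simp only at hcd' h
    obtain ⟨rfl, rfl⟩ := hinj c d c' d' hcd hcd' ((hbin c d hcd).symm.trans h)
    rfl
  · intro c d hcd
    refine ⟨_, ⟨hbwd c d hcd, hbin c d hcd⟩, ?_⟩
    rintro S ⟨⟨hS, hns⟩, h⟩
    obtain ⟨c', d', hcd', rfl⟩ := hfwd S hS hns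
    obtain ⟨rfl, rfl⟩ := hinj c' d' c d hcd' hcd ((hbin c' d' hcd').symm.trans h)
    rfl
end
end

section
/- Let (C_n,Π) be a parcycle with Π = {V_1,…,V_k}, k ≥ 2, sink V_k, and A = A_{(C_n,Π)}. Then the set of monomials {x^{S→S̄} : S a connected-parset of (C_n,Π) not containing V_k} is equal to the set of anti-diagonals of the 2×2 minors of A, i.e. equal to {A_{2,i}·A_{1,j} : 1 ≤ i < j ≤ k}. -/
noncomputable section

open MvPolynomial

/-- Position of `x` on the cycle, counted from `v`. -/
def posn (n : ℕ) [NeZero n] (v x : Fin n) : ℕ := ((x - v : Fin n) : ℕ)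

theorem posn_lt (n : ℕ) [NeZero n] (v x : Fin n) : posn n v x < n := (x - v).isLt

theorem posn_inj (n : ℕ) [NeZero n] (v x y : Fin n) (h : posn n v x = posn n v y) : x = y := by
  have h1 : x - v = y - v := Fin.ext h
  exact sub_left_injective h1

theorem posn_self (n : ℕ) [NeZero n] (v : Fin n) : posn n v v = 0 := by
  simp [posn]

theorem posn_succ (n : ℕ) [NeZero n] (hn : 3 ≤ n) (v x : Fin n) :
    posn n v (x + 1) = if posn n v x + 1 = n then 0 else posn n v x + 1 := by
  have h1 : x + 1 - v = (x - v) + 1 := by abel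
  have h2 := posn_lt n v x
  unfold posn at *
  rw [h1, Fin.val_add, Fin.val_one', Nat.mod_eq_of_lt (show 1 < n by omega)]
  split_ifs with h
  · rw [h, Nat.mod_self]
  · exact Nat.mod_eq_of_lt (by omega)

theorem posn_pred (n : ℕ) [NeZero n] (hn : 3 ≤ n) (v x : Fin n) :
    posn n v (x - 1) = if posn n v x = 0 then n - 1 else posn n v x - 1 := by
  have h := posn_succ n hn v (x - 1)
  rw [sub_add_cancel] at h
  have h2 := posn_lt n v (x - 1)
  split_ifs at * <;> omega

theorem outMono_arc (n : ℕ) (K : Type*) [NeZero n] [Field K] (hn : 3 ≤ n) (v A B : Fin n)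
    (S : Set (Fin n)) (hS : ∀ x, x ∈ S ↔ posn n v A ≤ posn n v x ∧ posn n v x ≤ posn n v B)
    (hA : 1 ≤ posn n v A) (hAB : posn n v A ≤ posn n v B) :
    outMono n K S = X A * X B := by
  classical
  have key : ∀ i, outVec n S i = (if i = A then 1 else 0) + (if i = B then 1 else 0) := by
    intro i
    have eA : i = A ↔ posn n v i = posn n v A := ⟨fun h => by rw [h], posn_inj n v i A⟩
    have eB : i = B ↔ posn n v i = posn n v B := ⟨fun h => by rw [h], posn_inj n v i B⟩
    have hB := posn_lt n v B
    have hi := posn_lt n v i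
    unfold outVec
    simp only [hS, eA, eB, posn_succ n hn, posn_pred n hn]
    split_ifs <;> omega
  unfold outMono
  simp only [key, pow_add, Finset.prod_mul_distrib, pow_ite, pow_one, pow_zero,
    Finset.prod_ite_eq', Finset.mem_univ, if_true]

theorem cycleG_adj (n : ℕ) [NeZero n] (hn : 3 ≤ n) (x y : Fin n) :
    (cycleG n).Adj x y ↔ y = x + 1 ∨ x = y + 1 := by
  have hne : ∀ z : Fin n, z ≠ z + 1 := by
    intro z h
    have h1 := posn_succ n hn z z
    rw [← h, posn_self] at h1
    split_ifs at h1 <;> omega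
  simp only [cycleG, SimpleGraph.fromRel_adj]
  constructor
  · exact fun h => h.2
  · rintro (h | h)
    · exact ⟨fun e => hne x (e.trans h), Or.inl h⟩
    · exact ⟨fun e => hne y (e.symm.trans h), Or.inr h⟩

theorem conn_closed (n : ℕ) [NeZero n] (hn : 3 ≤ n) (W : Set (Fin n))
    (hW : ((cycleG n).induce W).Connected) (P : Fin n → Prop)
    (h1 : ∀ x, x ∈ W → x + 1 ∈ W → (P x ↔ P (x + 1)))
    (x y : Fin n) (hx : x ∈ W) (hy : y ∈ W) (hP : P x) : P y := by
  obtain ⟨w⟩ := hW.preconnected ⟨x, hx⟩ ⟨y, hy⟩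
  have : ∀ a b : W, ((cycleG n).induce W).Walk a b → P a → P b := by
    intro a b w
    induction w with
    | nil => exact id
    | @cons a b c hab _ ih =>
      intro ha
      apply ih
      have hab' : (cycleG n).Adj a.1 b.1 := hab
      rw [cycleG_adj n hn] at hab'
      rcases hab' with h | h
      · have := h1 a.1 a.2 (h ▸ b.2)
        rw [h]; exact this.1 ha
      · have := h1 b.1 b.2 (h ▸ a.2)
        rw [h] at ha; exact this.2 ha
  exact this _ _ w hP

theorem arc_conn (n : ℕ) [NeZero n] (hn : 3 ≤ n) (v A B : Fin n)
    (S : Set (Fin n)) (hS : ∀ x, x ∈ S ↔ posn n v A ≤ posn n v x ∧ posn n v x ≤ posn n v B)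
    (hA : 1 ≤ posn n v A) (hAB : posn n v A ≤ posn n v B) :
    ((cycleG n).induce S).Connected := by
  have hAS : A ∈ S := (hS A).2 ⟨le_rfl, hAB⟩
  rw [SimpleGraph.connected_iff_exists_forall_reachable]
  refine ⟨⟨A, hAS⟩, ?_⟩
  have : ∀ d : ℕ, ∀ x (hx : x ∈ S), posn n v x = posn n v A + d →
      ((cycleG n).induce S).Reachable ⟨A, hAS⟩ ⟨x, hx⟩ := by
    intro d
    induction d with
    | zero =>
      intro x hx h
      obtain rfl := posn_inj n v x A h
      exact SimpleGraph.Reachable.refl _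
    | succ d ih =>
      intro x hx h
      have hp := posn_pred n hn v x
      rw [if_neg (by omega)] at hp
      have hxS := (hS x).1 hx
      have hm : x - 1 ∈ S := (hS _).2 ⟨by omega, by omega⟩
      refine (ih (x - 1) hm (by omega)).trans (SimpleGraph.Adj.reachable ?_)
      show (cycleG n).Adj (x - 1) x
      rw [cycleG_adj n hn]
      left; rw [sub_add_cancel]
  rintro ⟨x, hx⟩
  exact this (posn n v x - posn n v A) x hx (by have := (hS x).1 hx; omega)

/-- For a parcycle `(C_n, Π)` with matrix `A = A_{(C_n,Π)}` (columns the
directed relevant edges `(p_i, q_i)` in traversal order), the set of monomials `x^{S→S̄}`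
over connected-parsets `S` avoiding the sink equals the set of anti-diagonals
`A₂ᵢ · A₁ⱼ` (`i < j`) of the `2 × 2` minors of `A`. -/
theorem statement_5 (K : Type*) [Field K] (n k : ℕ) [NeZero n] (hn : 3 ≤ n) (hk : 2 ≤ k)
    (V : Fin k → Set (Fin n))
    (hcover : ∀ x : Fin n, ∃ j, x ∈ V j)
    (hdisj : ∀ j₁ j₂ : Fin k, j₁ ≠ j₂ → Disjoint (V j₁) (V j₂))
    (hconn : ∀ j, ((cycleG n).induce (V j)).Connected)
    (hsink : (⟨n - 1, by omega⟩ : Fin n) ∈ V ⟨k - 1, by omega⟩)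
    (p q : Fin k → Fin n)
    (hpq : ∀ c, q c = p c + 1)
    (hcross : ∀ c j, p c ∈ V j → q c ∉ V j)
    (hall : ∀ x : Fin n, (∃ j, x ∈ V j ∧ x + 1 ∉ V j) → ∃ c, p c = x)
    (hinjp : Function.Injective p)
    (horder : ∃ v₀, v₀ ∈ V ⟨k - 1, by omega⟩ ∧
      StrictMono fun c : Fin k => ((p c - v₀ : Fin n) : ℕ)) :
    { f : MvPolynomial (Fin n) K | ∃ S : Set (Fin n),
        isConnParset n k V S ∧ ¬ V ⟨k - 1, by omega⟩ ⊆ S ∧ f = outMono n K S }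
      = { f : MvPolynomial (Fin n) K | ∃ c₁ c₂ : Fin k, c₁ < c₂ ∧
          f = X (q c₁) * X (p c₂) } := by
  obtain ⟨v, hv, hmono⟩ := horder
  have hmono' : StrictMono fun c : Fin k => posn n v (p c) := hmono
  have huniq : ∀ x j₁ j₂, x ∈ V j₁ → x ∈ V j₂ → j₁ = j₂ := by
    intro x j₁ j₂ h1 h2
    by_contra hne
    exact Set.disjoint_left.1 (hdisj _ _ hne) h1 h2
  ext f
  simp only [Set.mem_setOf_eq]
  constructor
  · rintro ⟨S, ⟨⟨T, hT⟩, hSc⟩, hns, rfl⟩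
    have hSmem : ∀ x j, x ∈ V j → (x ∈ S ↔ j ∈ T) := by
      intro x j hx
      rw [hT]
      simp only [Set.mem_iUnion, exists_prop]
      constructor
      · rintro ⟨i, hi, hxi⟩
        rwa [huniq x j i hx hxi]
      · exact fun h => ⟨j, h, hx⟩
    have hvS : v ∉ S := fun h => hns fun y hy => (hSmem y _ hy).2 ((hSmem v _ hv).1 h)
    have hcr : ∀ x, ¬ (x ∈ S ↔ x + 1 ∈ S) → ∃ c, p c = x := by
      intro x hx
      obtain ⟨j, hj⟩ := hcover x
      refine hall x ⟨j, hj, fun h => hx ?_⟩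
      rw [hSmem x j hj, hSmem (x + 1) j h]
    obtain ⟨⟨s, hs⟩⟩ := hSc.nonempty
    obtain ⟨A, hAS, hAmin⟩ := Set.exists_min_image S (posn n v) (Set.toFinite S) ⟨s, hs⟩
    obtain ⟨B, hBS, hBmax⟩ := Set.exists_max_image S (posn n v) (Set.toFinite S) ⟨s, hs⟩
    have hpos : ∀ x ∈ S, 1 ≤ posn n v x := by
      intro x hx
      by_contra h
      apply hvS
      have : x = v := posn_inj n v x v (by rw [posn_self]; omega)
      rwa [← this]
    have hA := hpos A hAS
    have hAB := hAmin B hBS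
    have hS : ∀ x, x ∈ S ↔ posn n v A ≤ posn n v x ∧ posn n v x ≤ posn n v B := by
      intro x
      refine ⟨fun h => ⟨hAmin x h, hBmax x h⟩, fun ⟨h1, h2⟩ => ?_⟩
      by_contra hx
      have hAx : posn n v A ≠ posn n v x := fun e => hx (posn_inj n v A x e ▸ hAS)
      have := conn_closed n hn S hSc (fun y => posn n v y < posn n v x) ?_ A B hAS hBS
        (by show posn n v A < posn n v x; omega)
      · omega
      · intro y hy hy1
        have e1 := hpos _ hy1
        have e2 := posn_succ n hn v y
        have e3 : posn n v (y + 1) ≠ posn n v x := fun e => hx (posn_inj n v _ x e ▸ hy1)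
        have e4 : posn n v y ≠ posn n v x := fun e => hx (posn_inj n v _ x e ▸ hy)
        split_ifs at e2 <;> omega
    have hpA := posn_pred n hn v A
    rw [if_neg (by omega)] at hpA
    have hpB := posn_succ n hn v B
    obtain ⟨c₁, hc₁⟩ := hcr (A - 1) (by
      rw [sub_add_cancel, hS, hS]; omega)
    obtain ⟨c₂, hc₂⟩ := hcr B (by
      rw [hS, hS]; split_ifs at hpB <;> omega)
    refine ⟨c₁, c₂, ?_, ?_⟩
    · rw [← hmono'.lt_iff_lt]
      simp only [hc₁, hc₂]
      omega
    · rw [hpq, hc₁, hc₂, sub_add_cancel]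
      exact outMono_arc n K hn v A B S hS hA hAB
  · rintro ⟨c₁, c₂, hlt, rfl⟩
    have hlt' : posn n v (p c₁) < posn n v (p c₂) := hmono' hlt
    have hb := posn_lt n v (p c₂)
    have hq := posn_succ n hn v (p c₁)
    rw [← hpq, if_neg (by omega)] at hq
    let S : Set (Fin n) := {x | posn n v (q c₁) ≤ posn n v x ∧ posn n v x ≤ posn n v (p c₂)}
    have hS : ∀ x, x ∈ S ↔ posn n v (q c₁) ≤ posn n v x ∧ posn n v x ≤ posn n v (p c₂) :=
      fun x => Iff.rfl
    have hA : 1 ≤ posn n v (q c₁) := by omega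
    have hAB : posn n v (q c₁) ≤ posn n v (p c₂) := by omega
    refine ⟨S, ⟨⟨{j | V j ⊆ S}, ?_⟩, arc_conn n hn v _ _ S hS hA hAB⟩, ?_,
      (outMono_arc n K hn v _ _ S hS hA hAB).symm⟩
    · ext x
      simp only [Set.mem_iUnion, exists_prop, Set.mem_setOf_eq]
      constructor
      · intro hx
        obtain ⟨j, hj⟩ := hcover x
        refine ⟨j, fun y hy => ?_, hj⟩
        refine conn_closed n hn (V j) (hconn j) (fun z => z ∈ S) ?_ x y hj hy hx
        intro z hz hz1
        have hno : ∀ c, posn n v z ≠ posn n v (p c) := by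
          intro c e
          have e' := posn_inj n v _ _ e
          apply hcross c j (e' ▸ hz)
          rw [hpq, ← e']
          exact hz1
        have e1 := hno c₁
        have e2 := hno c₂
        have e3 := posn_succ n hn v z
        have e4 := posn_lt n v z
        simp only [hS]
        split_ifs at e3 <;> omega
      · rintro ⟨j, hj, hx⟩
        exact hj hx
    · intro h
      have := ((hS v).1 (h hv)).1
      rw [posn_self] at this
      omega
end
end

section
/- Let (C_n,Π) be a parcycle with Π = {V_1,…,V_k} and sink V_k. Then the toppling ideal of (C_n,Π) is generated by the binomials attached to connected-parsets avoiding the sink: I_Π = ⟨x^{S→S̄} − x^{S̄→S} : S a connected-parset of (C_n,Π) not containing V_k⟩. -/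
noncomputable section

open MvPolynomial

/-- The Laplacian of the cycle applied to a function. -/
def lapD (n : ℕ) [NeZero n] (s : Fin n → ℤ) (i : Fin n) : ℤ :=
  (s i - s (i + 1)) + (s i - s (i - 1))

open Classical in
/-- Integer indicator function. -/
def indZ (n : ℕ) (S : Set (Fin n)) (i : Fin n) : ℤ := if i ∈ S then 1 else 0

theorem fin_succ_ne (n : ℕ) [NeZero n] (hn : 3 ≤ n) (i : Fin n) : i + 1 ≠ i := by
  obtain ⟨m, rfl⟩ : ∃ m, n = m + 3 := ⟨n - 3, by omega⟩
  intro h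
  have h1 : (1 : Fin (m + 3)) = 0 := by simpa using h
  have := congrArg Fin.val h1
  simp at this

theorem fin_succ_ne_pred (n : ℕ) [NeZero n] (hn : 3 ≤ n) (i : Fin n) : i + 1 ≠ i - 1 := by
  obtain ⟨m, rfl⟩ : ∃ m, n = m + 3 := ⟨n - 3, by omega⟩
  intro h
  have h1 : (1 : Fin (m + 3)) + 1 = 0 := by
    have : i + 1 + 1 = i := by rw [h]; simp
    rw [add_assoc] at this
    simpa using this
  have := congrArg Fin.val h1
  rw [Fin.val_add] at this
  have h2 : (1 + 1) % (m + 3) = 0 := by simpa using this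
  rw [Nat.mod_eq_of_lt (by omega)] at h2
  omega

theorem bPart_eq (n : ℕ) [NeZero n] (hn : 3 ≤ n) (S : Set (Fin n)) :
    bPart n S = lapD n (indZ n S) := by
  classical
  funext l
  have key : ∀ j : Fin n, (if j ∈ S then cycLap n j else 0) l
      = 2 * (if j = l then indZ n S j else 0) - (if j = l + 1 then indZ n S j else 0)
        - (if j = l - 1 then indZ n S j else 0) := by
    intro j
    have h1 := fin_succ_ne n hn l
    have h2 := fin_succ_ne_pred n hn l
    have h3 : l - 1 ≠ l := by
      have := fin_succ_ne n hn (l - 1)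
      rw [sub_add_cancel] at this; exact this.symm
    have e1 : l = j + 1 ↔ j = l - 1 := by rw [eq_sub_iff_add_eq]; exact eq_comm
    unfold indZ cycLap
    by_cases hj : j ∈ S
    · simp only [hj, if_true, e1, eq_comm (a := l) (b := j)]
      by_cases a : j = l
      · subst a; simp [h1.symm, h3.symm]
      · by_cases b : j = l + 1
        · subst b; simp [h1, h2]
        · simp [a, b]; split_ifs <;> simp
    · simp [hj]
  unfold bPart
  rw [Finset.sum_apply, Finset.sum_congr rfl (fun j _ => key j)]
  simp only [Finset.sum_sub_distrib, ← Finset.mul_sum, Finset.sum_ite_eq', Finset.mem_univ,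
    if_true, Finset.sum_ite_eq]
  unfold lapD
  ring

theorem outVec_sub (n : ℕ) [NeZero n] (S : Set (Fin n)) (i : Fin n) :
    (outVec n S i : ℤ) - outVec n Sᶜ i = lapD n (indZ n S) i := by
  classical
  unfold outVec lapD indZ
  by_cases a : i ∈ S <;> by_cases b : i + 1 ∈ S <;> by_cases c : i - 1 ∈ S <;> simp [a, b, c]

theorem cyc_adj_succ (n : ℕ) [NeZero n] (hn : 3 ≤ n) (i : Fin n) : (cycleG n).Adj i (i + 1) := by
  simp [cycleG, SimpleGraph.fromRel_adj]
  have := fin_succ_ne n hn 0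
  simpa using this

theorem cyc_adj_pred (n : ℕ) [NeZero n] (hn : 3 ≤ n) (i : Fin n) : (cycleG n).Adj i (i - 1) := by
  have := cyc_adj_succ n hn (i - 1)
  rw [sub_add_cancel] at this
  exact this.symm

/-- A maximal connected subset. -/
theorem exists_comp (n k : ℕ) [NeZero n] (V : Fin k → Set (Fin n))
    (hcover : ∀ x : Fin n, ∃ j, x ∈ V j)
    (hconn : ∀ j, ((cycleG n).induce (V j)).Connected)
    (S : Set (Fin n)) (hS : ∀ j x, x ∈ V j → x ∈ S → V j ⊆ S) (hne : S.Nonempty) :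
    ∃ C ⊆ S, isConnParset n k V C ∧ (∀ j x, x ∈ V j → x ∈ C → V j ⊆ C) ∧
      ∀ c ∈ C, ∀ d ∈ S, (cycleG n).Adj c d → d ∈ C := by
  classical
  obtain ⟨x0, hx0⟩ := hne
  obtain ⟨j0, hj0⟩ := hcover x0
  obtain ⟨C, hC⟩ := (Set.toFinite {C : Set (Fin n) | C ⊆ S ∧ ((cycleG n).induce C).Connected}).exists_maximal
    ⟨V j0, hS j0 x0 hj0 hx0, hconn j0⟩
  obtain ⟨hCS, hCc⟩ := hC.prop
  have hpart : ∀ j x, x ∈ V j → x ∈ C → V j ⊆ C := by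
    intro j x hx hxC
    have hu : (C ∪ V j) ∈ {C : Set (Fin n) | C ⊆ S ∧ ((cycleG n).induce C).Connected} :=
      ⟨Set.union_subset hCS (hS j x hx (hCS hxC)),
        SimpleGraph.induce_union_connected hCc.preconnected (hconn j).preconnected ⟨x, hxC, hx⟩⟩
    exact Set.subset_union_right.trans (hC.le_of_ge hu Set.subset_union_left)
  refine ⟨C, hCS, ⟨⟨{j | V j ⊆ C}, ?_⟩, hCc⟩, hpart, ?_⟩
  · ext x
    simp only [Set.mem_ofPred_eq, Set.mem_iUnion, exists_prop]
    constructor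
    · intro hx
      obtain ⟨j, hj⟩ := hcover x
      exact ⟨j, hpart j x hj hx, hj⟩
    · rintro ⟨j, hj, hx⟩
      exact hj hx
  · intro c hc d hd hadj
    have hu : (C ∪ {d}) ∈ {C : Set (Fin n) | C ⊆ S ∧ ((cycleG n).induce C).Connected} := by
      refine ⟨Set.union_subset hCS (by simpa using hd), ?_⟩
      have h2 : ((cycleG n).induce {c, d}).Connected := SimpleGraph.induce_pair_connected_of_adj hadj
      have := SimpleGraph.induce_union_connected (t := {c, d}) hCc.preconnected h2.preconnected ⟨c, hc, by simp⟩
      have e : C ∪ {c, d} = C ∪ {d} := by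
        ext y; simp; rintro rfl; exact Or.inr hc
      rwa [e] at this
    exact hC.le_of_ge hu Set.subset_union_left (by simp)

theorem main_ind (K : Type*) [Field K] (n k : ℕ) [NeZero n] (hn : 3 ≤ n)
    (V : Fin k → Set (Fin n))
    (hcover : ∀ x : Fin n, ∃ j, x ∈ V j)
    (hconn : ∀ j, ((cycleG n).induce (V j)).Connected)
    (q : Fin n) (sk : Fin k) (hq : q ∈ V sk)
    (J : Ideal (MvPolynomial (Fin n) K))
    (hJ : ∀ S : Set (Fin n), isConnParset n k V S → ¬ V sk ⊆ S →
      outMono n K S - outMono n K Sᶜ ∈ J) :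
    ∀ (N : ℕ) (s : Fin n → ℤ) (u v : Fin n → ℕ), (∑ i, (s i).natAbs) ≤ N →
      (∀ j, ∀ x ∈ V j, ∀ y ∈ V j, s x = s y) → s q = 0 →
      (∀ i, (u i : ℤ) - v i = lapD n s i) →
      ((∏ i, X i ^ u i) - ∏ i, X i ^ v i : MvPolynomial (Fin n) K) ∈ J := by
  classical
  intro N
  induction N with
  | zero =>
    intro s u v hs _ _ huv
    have h0 : ∀ i, s i = 0 := by
      intro i
      have := (Finset.sum_eq_zero_iff.1 (Nat.le_zero.1 hs)) i (Finset.mem_univ i)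
      simpa using this
    have : u = v := by
      funext i
      have := huv i
      simp [lapD, h0] at this
      omega
    subst this
    simp
  | succ N ih =>
    have pos : ∀ (s : Fin n → ℤ) (u v : Fin n → ℕ), (∑ i, (s i).natAbs) ≤ N + 1 →
      (∀ j, ∀ x ∈ V j, ∀ y ∈ V j, s x = s y) → s q = 0 →
      (∀ i, (u i : ℤ) - v i = lapD n s i) → (∃ i, 0 < s i) →
      ((∏ i, X i ^ u i) - ∏ i, X i ^ v i : MvPolynomial (Fin n) K) ∈ J := by
      intro s u v hs hV hsq huv ⟨i0, hi0⟩
      obtain ⟨m, -, hm⟩ := Finset.exists_max_image Finset.univ s ⟨i0, Finset.mem_univ _⟩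
      have hm' : ∀ i, s i ≤ s m := fun i => hm i (Finset.mem_univ i)
      have hmpos : 0 < s m := lt_of_lt_of_le hi0 (hm' i0)
      obtain ⟨C, hCS, hCp, hCV, hCadj⟩ := exists_comp n k V hcover hconn {i | s i = s m}
        (fun j x hx hxS y hy => (hV j y hy x hx).trans hxS) ⟨m, rfl⟩
      have hle : ∀ i, outVec n C i ≤ u i := by
        intro i
        by_cases hi : i ∈ C
        · have hsi : s i = s m := hCS hi
          have nb : ∀ d, (cycleG n).Adj i d → d ∉ C → s d + 1 ≤ s m := by
            intro d hd hdC
            rcases lt_or_eq_of_le (hm' d) with h | h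
            · omega
            · exact absurd (hCadj i hi d h hd) hdC
          have h1 := nb (i + 1) (cyc_adj_succ n hn i)
          have h2 := nb (i - 1) (cyc_adj_pred n hn i)
          have h3 := hm' (i + 1)
          have h4 := hm' (i - 1)
          have h5 := huv i
          unfold lapD at h5
          unfold outVec
          by_cases a : i + 1 ∈ C <;> by_cases b : i - 1 ∈ C <;> simp [a, b, hi] at h1 h2 ⊢ <;> omega
        · simp [outVec, hi]
      have hsink : ¬ V sk ⊆ C := by
        intro h
        have : s q = s m := hCS (h hq)
        omega
      have hgen := hJ C hCp hsink
      have hrec := ih (fun i => s i - indZ n C i)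
        (fun i => (u i - outVec n C i) + outVec n Cᶜ i) v ?_ ?_ ?_ ?_
      · have e : ((∏ i, X i ^ u i) - ∏ i, X i ^ v i : MvPolynomial (Fin n) K)
          = (∏ i, X i ^ (u i - outVec n C i)) * (outMono n K C - outMono n K Cᶜ)
            + ((∏ i, X i ^ ((u i - outVec n C i) + outVec n Cᶜ i)) - ∏ i, X i ^ v i) := by
          have e1 : (∏ i, X i ^ u i : MvPolynomial (Fin n) K)
            = (∏ i, X i ^ (u i - outVec n C i)) * outMono n K C := by
            unfold outMono
            rw [← Finset.prod_mul_distrib]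
            refine Finset.prod_congr rfl fun i _ => ?_
            rw [← pow_add, Nat.sub_add_cancel (hle i)]
          have e2 : (∏ i, X i ^ ((u i - outVec n C i) + outVec n Cᶜ i) : MvPolynomial (Fin n) K)
            = (∏ i, X i ^ (u i - outVec n C i)) * outMono n K Cᶜ := by
            unfold outMono
            rw [← Finset.prod_mul_distrib]
            refine Finset.prod_congr rfl fun i _ => ?_
            rw [← pow_add]
          rw [e2, e1]
          ring
        rw [e]
        exact J.add_mem (J.mul_mem_left _ hgen) hrec
      · have : (∑ i, (s i - indZ n C i).natAbs) < ∑ i, (s i).natAbs := by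
          obtain ⟨⟨c, hc⟩⟩ := hCp.2.nonempty
          refine Finset.sum_lt_sum (fun i _ => ?_) ⟨c, Finset.mem_univ _, ?_⟩
          · by_cases hi : i ∈ C
            · have : s i = s m := hCS hi
              simp only [indZ, hi, if_true]
              omega
            · simp [indZ, hi]
          · have : s c = s m := hCS hc
            simp only [indZ, hc, if_true]
            omega
        omega
      · intro j x hx y hy
        have h1 : x ∈ C ↔ y ∈ C := ⟨fun h => hCV j x hx h hy, fun h => hCV j y hy h hx⟩
        simp only [indZ, h1, hV j x hx y hy]
      · have hqC : q ∉ C := by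
          intro h
          have : s q = s m := hCS h
          omega
        simp [indZ, hqC, hsq]
      · intro i
        have h1 := hle i
        have h2 := huv i
        have h3 := outVec_sub n C i
        simp only [lapD] at h2 h3 ⊢
        push_cast [Nat.cast_sub h1]
        linarith
    intro s u v hs hV hsq huv
    by_cases hp : ∃ i, 0 < s i
    · exact pos s u v hs hV hsq huv hp
    by_cases hp' : ∃ i, 0 < - s i
    · have := pos (fun i => - s i) v u (by simpa using hs)
        (fun j x hx y hy => by simp [hV j x hx y hy]) (by simp [hsq])
        (fun i => by have := huv i; simp only [lapD] at this ⊢; linarith) hp'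
      rw [← neg_sub]
      exact J.neg_mem this
    · have h0 : ∀ i, s i = 0 := by
        intro i
        push Not at hp hp'
        have := hp i
        have := hp' i
        omega
      exact ih s u v (by simp [h0]) hV hsq huv

/-- The toppling ideal of a parcycle `(C_n, Π)` with sink `V_k` is
generated by the binomials `x^{S→S̄} - x^{S̄→S}` over all connected-parsets `S` of
`(C_n, Π)` not containing the sink. -/
theorem statement_6 (K : Type*) [Field K] (n k : ℕ) [NeZero n] (hn : 3 ≤ n) (hk : 1 ≤ k)
    (V : Fin k → Set (Fin n))
    (hcover : ∀ x : Fin n, ∃ j, x ∈ V j)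
    (hdisj : ∀ j₁ j₂ : Fin k, j₁ ≠ j₂ → Disjoint (V j₁) (V j₂))
    (hconn : ∀ j, ((cycleG n).induce (V j)).Connected)
    (hsink : (⟨n - 1, by omega⟩ : Fin n) ∈ V ⟨k - 1, by omega⟩) :
    topplingPar n k K V
      = Ideal.span { f | ∃ S : Set (Fin n),
          isConnParset n k V S ∧ ¬ V ⟨k - 1, by omega⟩ ⊆ S ∧
          f = outMono n K S - outMono n K Sᶜ } := by
  classical
  apply le_antisymm
  · unfold topplingPar latticeIdeal
    rw [Ideal.span_le]
    rintro f ⟨u, v, huv, rfl⟩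
    have hs : ∀ w ∈ Submodule.span ℤ (Set.range fun j => bPart n (V j)),
        ∃ s : Fin n → ℤ, (∀ j, ∀ x ∈ V j, ∀ y ∈ V j, s x = s y) ∧ w = lapD n s := by
      intro w hw
      induction hw using Submodule.span_induction with
      | mem w h =>
        obtain ⟨j, rfl⟩ := h
        refine ⟨indZ n (V j), ?_, bPart_eq n hn _⟩
        intro j' x hx y hy
        by_cases e : j' = j
        · subst e; simp [indZ, hx, hy]
        · have hd := hdisj j' j e
          simp [indZ, Set.disjoint_left.1 hd hx, Set.disjoint_left.1 hd hy]
      | zero => exact ⟨0, by simp, by funext i; simp [lapD]⟩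
      | add a b _ _ ha hb =>
        obtain ⟨s, hs, rfl⟩ := ha
        obtain ⟨t, ht, rfl⟩ := hb
        refine ⟨s + t, fun j x hx y hy => ?_, ?_⟩
        · simp [hs j x hx y hy, ht j x hx y hy]
        · funext i; simp only [lapD, Pi.add_apply]; ring
      | smul c a _ ha =>
        obtain ⟨s, hs, rfl⟩ := ha
        refine ⟨c • s, fun j x hx y hy => ?_, ?_⟩
        · simp [hs j x hx y hy]
        · funext i; simp only [lapD, Pi.smul_apply, smul_eq_mul]; ring
    obtain ⟨s, hsV, hsw⟩ := hs _ huv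
    refine main_ind K n k hn V hcover hconn _ _ hsink _
      (fun S h1 h2 => Ideal.subset_span (by exact ⟨S, h1, h2, rfl⟩)) _
      (fun i => s i - s ⟨n - 1, by omega⟩) u v le_rfl ?_ (by simp) ?_
    · intro j x hx y hy
      simp [hsV j x hx y hy]
    · intro i
      have := congrFun hsw i
      simp only [lapD, Pi.sub_apply] at this ⊢
      linarith
  · rw [Ideal.span_le]
    rintro f ⟨S, ⟨⟨T, hT⟩, -⟩, -, rfl⟩
    refine Ideal.subset_span ⟨outVec n S, outVec n Sᶜ, ?_, rfl⟩
    have e : ((fun i => (outVec n S i : ℤ)) - fun i => (outVec n Sᶜ i : ℤ))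
        = ∑ j : Fin k, if j ∈ T then bPart n (V j) else 0 := by
      have e1 : ∀ i, indZ n S i = ∑ j : Fin k, if j ∈ T then indZ n (V j) i else 0 := by
        intro i
        obtain ⟨j, hj⟩ := hcover i
        have hne : ∀ j', j' ≠ j → i ∉ V j' := fun j' h h' =>
          Set.disjoint_left.1 (hdisj j' j h) h' hj
        rw [Finset.sum_eq_single j]
        · have : i ∈ S ↔ j ∈ T := by
            rw [hT]
            simp only [Set.mem_iUnion, exists_prop]
            constructor
            · rintro ⟨j', h1, h2⟩
              by_cases e : j' = j
              · exact e ▸ h1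
              · exact absurd h2 (hne j' e)
            · exact fun h => ⟨j, h, hj⟩
          simp [indZ, this, hj]
        · intro j' _ h
          simp [indZ, hne j' h]
        · simp
      funext i
      have e2 : ∀ j : Fin k, (if j ∈ T then bPart n (V j) else 0) i
          = ((if j ∈ T then indZ n (V j) i else 0) - (if j ∈ T then indZ n (V j) (i + 1) else 0))
          + ((if j ∈ T then indZ n (V j) i else 0) - (if j ∈ T then indZ n (V j) (i - 1) else 0)) := by
        intro j
        by_cases h : j ∈ T
        · simp [h, bPart_eq n hn, lapD]
        · simp [h]
      rw [Pi.sub_apply, outVec_sub, Finset.sum_apply, Finset.sum_congr rfl (fun j _ => e2 j)]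
      simp only [lapD, Finset.sum_add_distrib, Finset.sum_sub_distrib, e1]
    rw [e]
    refine Submodule.sum_mem _ fun j _ => ?_
    split_ifs
    · exact Submodule.subset_span ⟨j, rfl⟩
    · exact Submodule.zero_mem _
end
end

section
/- Let (C_n,Π) be a parcycle with Π = {V_1,…,V_k} and sink V_k, and let λ ∈ ℕ^n be a weight vector satisfying λ·b_{V_i} > 0 for all i = 1,…,k−1. Then the λ-initial ideal of the toppling ideal equals the G-parking function ideal: in_λ(I_Π) = M_Π. -/
noncomputable section

open MvPolynomial

theorem aux_mono (n : ℕ) (K : Type*) [Field K] (u : Fin n → ℕ) :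
    (∏ i, X i ^ u i : MvPolynomial (Fin n) K) = monomial (Finsupp.equivFunOnFinite.symm u) 1 := by
  rw [monomial_eq, Finsupp.prod_fintype _ _ (by simp)]
  simp

theorem aux_fin (n : ℕ) [NeZero n] (hn : 3 ≤ n) (i : Fin n) :
    i + 1 ≠ i ∧ i - 1 ≠ i ∧ i + 1 ≠ i - 1 := by
  obtain ⟨m, rfl⟩ : ∃ m, n = m + 3 := ⟨n - 3, by omega⟩
  have h1 : (1 : Fin (m + 3)) ≠ 0 := by simp [Fin.ext_iff]
  have h2 : (1 + 1 : Fin (m + 3)) ≠ 0 := by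
    simp only [ne_eq, Fin.ext_iff, Fin.val_add]
    simp
    rw [Nat.mod_eq_of_lt (by omega)]
    omega
  refine ⟨?_, ?_, ?_⟩
  · simpa using h1
  · simpa using h1
  · intro h
    apply h2
    have : i + (1 + 1) = i := by
      rw [← add_assoc, h, sub_add_cancel]
    simpa using this

theorem aux_lap (n : ℕ) [NeZero n] (hn : 3 ≤ n) (j i : Fin n) :
    cycLap n j i = (if j = i then 2 else 0) + (if j = i + 1 then -1 else 0)
      + (if j = i - 1 then -1 else 0) := by
  obtain ⟨h1, h2, h3⟩ := aux_fin n hn i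
  have e : i = j + 1 ↔ j = i - 1 := by
    rw [eq_sub_iff_add_eq, eq_comm]
  unfold cycLap
  simp only [e]
  by_cases ha : j = i
  · subst ha; simp [h1.symm, h2.symm]
  · by_cases hb : j = i + 1
    · subst hb; simp [h1.symm, h3, ha]
    · by_cases hc : j = i - 1
      · subst hc; simp [h2.symm, hb, ha]
      · simp [ha, hb, hc, Ne.symm ha]

theorem aux_lapsum (n : ℕ) [NeZero n] (hn : 3 ≤ n) (c : Fin n → ℤ) (i : Fin n) :
    ∑ j, c j * cycLap n j i = 2 * c i - c (i + 1) - c (i - 1) := by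
  simp only [aux_lap n hn, mul_add, Finset.sum_add_distrib, mul_ite, mul_zero,
    Finset.sum_ite_eq', Finset.mem_univ, if_true]
  simp
  ring

open Classical in
theorem aux_bPart (n : ℕ) [NeZero n] (S : Set (Fin n)) (i : Fin n) :
    bPart n S i = ∑ j, (if j ∈ S then 1 else 0) * cycLap n j i := by
  unfold bPart
  rw [Finset.sum_apply]
  refine Finset.sum_congr rfl fun j _ => ?_
  split_ifs <;> simp

theorem aux_out (n : ℕ) [NeZero n] (hn : 3 ≤ n) (S : Set (Fin n)) (i : Fin n) :
    bPart n S i = (outVec n S i : ℤ) - outVec n Sᶜ i := by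
  classical
  rw [aux_bPart, aux_lapsum n hn]
  unfold outVec
  by_cases h1 : i ∈ S <;> by_cases h2 : i + 1 ∈ S <;> by_cases h3 : i - 1 ∈ S <;>
    simp [h1, h2, h3]

theorem aux_comb (n k : ℕ) [NeZero n] (hn : 3 ≤ n) (V : Fin k → Set (Fin n))
    (p : Fin n → Fin k) (hp : ∀ i j, i ∈ V j ↔ p i = j) (c : Fin k → ℤ) (i : Fin n) :
    ∑ j, c j * bPart n (V j) i = 2 * c (p i) - c (p (i + 1)) - c (p (i - 1)) := by
  classical
  rw [← aux_lapsum n hn (fun l => c (p l))]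
  simp only [aux_bPart, Finset.mul_sum]
  rw [Finset.sum_comm]
  refine Finset.sum_congr rfl fun l _ => ?_
  simp only [hp]
  simp

/-- The grading map of the polynomial ring by the quotient of the lattice. -/
def aux_phi (n : ℕ) (K : Type*) [Field K] (L : Submodule ℤ (Fin n → ℤ)) :
    MvPolynomial (Fin n) K →ₐ[K] AddMonoidAlgebra K ((Fin n → ℤ) ⧸ L) :=
  aeval fun i => AddMonoidAlgebra.single (L.mkQ (Pi.single i 1)) 1

theorem aux_phi_mono (n : ℕ) (K : Type*) [Field K] (L : Submodule ℤ (Fin n → ℤ))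
    (u : Fin n →₀ ℕ) (a : K) :
    aux_phi n K L (monomial u a) = AddMonoidAlgebra.single (L.mkQ fun i => (u i : ℤ)) a := by
  unfold aux_phi
  rw [aeval_monomial, Finsupp.prod_fintype _ _ (by simp)]
  simp only [AddMonoidAlgebra.single_pow, one_pow]
  have h : ∀ s : Finset (Fin n), ∏ i ∈ s, (AddMonoidAlgebra.single (u i • L.mkQ (Pi.single i 1)) 1
      : AddMonoidAlgebra K ((Fin n → ℤ) ⧸ L)) =
      AddMonoidAlgebra.single (∑ i ∈ s, u i • L.mkQ (Pi.single i 1)) 1 := by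
    intro s
    induction s using Finset.induction_on with
    | empty => simp [AddMonoidAlgebra.one_def]
    | insert a s ha ih =>
      rw [Finset.prod_insert ha, Finset.sum_insert ha, ih, AddMonoidAlgebra.single_mul_single, one_mul]
  rw [h]
  have e : ∑ i, u i • L.mkQ (Pi.single i 1) = L.mkQ fun i => (u i : ℤ) := by
    simp only [← map_nsmul, ← map_sum]
    congr 1
    ext i
    simp [Finset.sum_apply, Pi.single_apply]
  rw [e, ← Algebra.smul_def, AddMonoidAlgebra.smul_single, smul_eq_mul, mul_one]

theorem aux_phi_ker (n : ℕ) (K : Type*) [Field K] (L : Submodule ℤ (Fin n → ℤ))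
    (f : MvPolynomial (Fin n) K) (hf : f ∈ latticeIdeal n K L) : aux_phi n K L f = 0 := by
  have : latticeIdeal n K L ≤ RingHom.ker (aux_phi n K L) := by
    unfold latticeIdeal
    rw [Ideal.span_le]
    rintro _ ⟨u, v, huv, rfl⟩
    simp only [SetLike.mem_coe, RingHom.mem_ker]
    rw [map_sub, aux_mono, aux_mono, aux_phi_mono, aux_phi_mono, sub_eq_zero]
    congr 1
    simpa [sub_eq_zero] using (Submodule.Quotient.eq L).2 huv
  exact this hf

theorem aux_other (n : ℕ) (K : Type*) [Field K] (L : Submodule ℤ (Fin n → ℤ))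
    (f : MvPolynomial (Fin n) K) (hf : f ∈ latticeIdeal n K L) (u : Fin n →₀ ℕ)
    (hu : u ∈ f.support) : ∃ v ∈ f.support, v ≠ u ∧
      ((fun i => (u i : ℤ)) - fun i => (v i : ℤ)) ∈ L := by
  classical
  by_contra! hcon
  have h0 := aux_phi_ker n K L f hf
  rw [f.as_sum, map_sum] at h0
  simp only [aux_phi_mono] at h0
  have h1 := congrArg (fun z => AddMonoidAlgebra.coeff z (L.mkQ fun i => (u i : ℤ))) h0
  simp only [AddMonoidAlgebra.coeff_sum, AddMonoidAlgebra.coeff_single, Finsupp.finsetSum_apply] at h1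
  rw [Finset.sum_eq_single_of_mem u hu] at h1
  · simp at h1
    exact (mem_support_iff.1 hu) h1
  · intro v hv hvu
    rw [Finsupp.single_apply, if_neg]
    intro e
    exact hcon v hv hvu ((Submodule.Quotient.eq L).1 e.symm)

theorem aux_component (n k : ℕ) [NeZero n] (V : Fin k → Set (Fin n))
    (p : Fin n → Fin k) (hp : ∀ i j, i ∈ V j ↔ p i = j)
    (hconn : ∀ j, ((cycleG n).induce (V j)).Connected)
    (T : Set (Fin k)) (hT : T.Nonempty) :
    ∃ T' ⊆ T, ((cycleG n).induce (⋃ j ∈ T', V j)).Connected ∧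
      ∀ i l, p i ∈ T' → (cycleG n).Adj i l → p l ∈ T → p l ∈ T' := by
  classical
  obtain ⟨j0, hj0⟩ := hT
  have hne : {T' : Set (Fin k) | T' ⊆ T ∧ ((cycleG n).induce (⋃ j ∈ T', V j)).Connected}.Nonempty := by
    refine ⟨{j0}, by simpa using hj0, ?_⟩
    have : (⋃ j ∈ ({j0} : Set (Fin k)), V j) = V j0 := by simp
    rw [this]; exact hconn j0
  obtain ⟨T', hT'⟩ := (Set.toFinite _).exists_maximal hne
  refine ⟨T', hT'.prop.1, hT'.prop.2, ?_⟩
  intro i l hi hil hl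
  have : insert (p l) T' ≤ T' := by
    refine hT'.2 ⟨Set.insert_subset hl hT'.prop.1, ?_⟩ (Set.subset_insert _ _)
    rw [Set.biUnion_insert, Set.union_comm]
    refine SimpleGraph.connected_induce_union (v := i) (w := l) ?_ ?_ ?_ ?_ ?_
    all_goals first
      | exact hT'.prop.2
      | exact hT'.prop.2.preconnected
      | exact hconn _
      | exact (hconn _).preconnected
      | exact hil
      | (simp [hp]; done)
      | (simp [hp]; exact hi)
  exact this (Set.mem_insert _ _)

theorem aux_adj (n : ℕ) [NeZero n] (hn : 3 ≤ n) (i : Fin n) :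
    (cycleG n).Adj i (i + 1) ∧ (cycleG n).Adj i (i - 1) := by
  obtain ⟨h1, h2, h3⟩ := aux_fin n hn i
  unfold cycleG
  simp [SimpleGraph.fromRel_adj, h1.symm, h2.symm]

theorem aux_wdeg (n : ℕ) (lam : Fin n → ℕ) (u v : Fin n →₀ ℕ) :
    (wdeg n lam u : ℤ) - wdeg n lam v = ∑ l, (lam l : ℤ) * ((u l : ℤ) - v l) := by
  unfold wdeg
  push_cast
  simp [mul_sub]

/-- Main combinatorial claim. -/
theorem aux_claim (K : Type*) [Field K] (n k : ℕ) [NeZero n] (hn : 3 ≤ n)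
    (V : Fin k → Set (Fin n)) (s : Fin k)
    (p : Fin n → Fin k) (hp : ∀ i j, i ∈ V j ↔ p i = j)
    (hconn : ∀ j, ((cycleG n).induce (V j)).Connected)
    (lam : Fin n → ℕ)
    (hlam : ∀ j : Fin k, j ≠ s → 0 < ∑ l, (lam l : ℤ) * bPart n (V j) l)
    (u v : Fin n →₀ ℕ) (huv : v ≠ u)
    (hL : ((fun i => (u i : ℤ)) - fun i => (v i : ℤ)) ∈
      Submodule.span ℤ (Set.range fun j => bPart n (V j)))
    (hw : wdeg n lam v ≤ wdeg n lam u) :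
    monomial u 1 ∈ gparkIdeal n k K V s := by
  classical
  obtain ⟨c', hc'⟩ := (Submodule.mem_span_range_iff_exists_fun ℤ).1 hL
  obtain ⟨c, hcs, hc⟩ : ∃ c : Fin k → ℤ, c s = 0 ∧
      ∀ i, (u i : ℤ) - v i = ∑ j, c j * bPart n (V j) i := by
    refine ⟨fun j => c' j - c' s, by simp, fun i => ?_⟩
    have := congrFun hc' i
    simp only [Finset.sum_apply, Pi.smul_apply, smul_eq_mul, Pi.sub_apply] at this
    rw [aux_comb n k hn V p hp, ← this, aux_comb n k hn V p hp]
    ring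
  have hpos : ∃ j, 0 < c j := by
    by_contra! hneg
    have h1 : (0 : ℤ) ≤ (wdeg n lam u : ℤ) - wdeg n lam v := by
      have : (wdeg n lam v : ℤ) ≤ wdeg n lam u := by exact_mod_cast hw
      linarith
    have h2 : (wdeg n lam u : ℤ) - wdeg n lam v
        = ∑ j, c j * ∑ l, (lam l : ℤ) * bPart n (V j) l := by
      rw [aux_wdeg]
      simp only [hc, Finset.mul_sum]
      rw [Finset.sum_comm]
      refine Finset.sum_congr rfl fun j _ => Finset.sum_congr rfl fun l _ => by ring
    have h3 : ∀ j ∈ Finset.univ, c j * ∑ l, (lam l : ℤ) * bPart n (V j) l ≤ 0 := by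
      intro j _
      by_cases hj : j = s
      · subst hj; simp [hcs]
      · exact mul_nonpos_of_nonpos_of_nonneg (hneg j) (hlam j hj).le
    have h4 : ∑ j, c j * ∑ l, (lam l : ℤ) * bPart n (V j) l = 0 :=
      le_antisymm (Finset.sum_nonpos h3) (h2 ▸ h1)
    have h5 := (Finset.sum_eq_zero_iff_of_nonpos h3).1 h4
    have h6 : ∀ j, c j = 0 := by
      intro j
      by_cases hj : j = s
      · rw [hj, hcs]
      · exact (mul_eq_zero.1 (h5 j (Finset.mem_univ _))).resolve_right (hlam j hj).ne'
    apply huv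
    ext i
    have := hc i
    simp [h6] at this
    omega
  obtain ⟨j1, hj1⟩ := hpos
  obtain ⟨m, -, hm⟩ := Finset.exists_max_image Finset.univ c ⟨s, Finset.mem_univ _⟩
  have hm' : ∀ j, c j ≤ c m := fun j => hm j (Finset.mem_univ _)
  obtain ⟨T', hT'T, hT'c, hT'⟩ := aux_component n k V p hp hconn {j | c j = c m} ⟨m, rfl⟩
  have hmem : ∀ i, i ∈ (⋃ j ∈ T', V j) ↔ p i ∈ T' := by
    intro i; simp [hp]
  have hsT : s ∉ T' := by
    intro h
    have h1 : c s = c m := hT'T h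
    have := hm' j1
    omega
  have hle : ∀ i, outVec n (⋃ j ∈ T', V j) i ≤ u i := by
    intro i
    unfold outVec
    simp only [hmem]
    by_cases hi : p i ∈ T'
    · have e := hc i
      rw [aux_comb n k hn V p hp] at e
      have e0 : c (p i) = c m := hT'T hi
      have e1 := hm' (p (i + 1))
      have e2 := hm' (p (i - 1))
      have a1 := hT' i (i + 1) hi (aux_adj n hn i).1
      have a2 := hT' i (i - 1) hi (aux_adj n hn i).2
      simp only [Set.mem_ofPred_eq] at a1 a2
      rw [if_pos hi]
      have b1 : p (i + 1) ∉ T' → c (p (i + 1)) ≠ c m := fun h h' => h (a1 h')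
      have b2 : p (i - 1) ∉ T' → c (p (i - 1)) ≠ c m := fun h h' => h (a2 h')
      by_cases t1 : p (i + 1) ∈ T' <;> by_cases t2 : p (i - 1) ∈ T' <;>
        simp only [t1, t2, if_true, if_false, not_true_eq_false, not_false_eq_true,
          true_implies, false_implies] at b1 b2 ⊢ <;> omega
    · simp [hi]
  have hgen : outMono n K (⋃ j ∈ T', V j) ∈ gparkIdeal n k K V s := by
    refine Ideal.subset_span ⟨_, ⟨⟨T', rfl⟩, hT'c⟩, ?_, rfl⟩
    intro hsub
    obtain ⟨⟨x, hx⟩⟩ := (hconn s).nonempty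
    have h1 := (hmem x).1 (hsub hx)
    rw [(hp x s).1 hx] at h1
    exact hsT h1
  have hdvd : outMono n K (⋃ j ∈ T', V j) ∣ monomial u 1 := by
    unfold outMono
    rw [aux_mono, monomial_dvd_monomial]
    refine ⟨Or.inr ?_, dvd_rfl⟩
    intro i
    simpa using hle i
  exact Ideal.mem_of_dvd _ hdvd hgen

theorem aux_init (K : Type*) [Field K] (n : ℕ) (lam : Fin n → ℕ) (a b : Fin n →₀ ℕ)
    (h : wdeg n lam b < wdeg n lam a) :
    initForm n K lam (monomial a 1 - monomial b 1) = monomial a 1 := by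
  classical
  have hab : a ≠ b := by rintro rfl; exact lt_irrefl _ h
  have hs : (monomial a 1 - monomial b 1 : MvPolynomial (Fin n) K).support = {a, b} := by
    ext x
    rw [mem_support_iff, coeff_sub, coeff_monomial, coeff_monomial]
    by_cases h1 : a = x
    · subst h1; simp [hab.symm]
    · by_cases h2 : b = x
      · subst h2; simp [hab]
      · simp [h1, h2, Ne.symm h1, Ne.symm h2]
  unfold initForm
  rw [hs]
  have hsup : ({a, b} : Finset (Fin n →₀ ℕ)).sup (wdeg n lam) = wdeg n lam a := by
    simp [h.le]
  rw [hsup]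
  have hf : ({a, b} : Finset (Fin n →₀ ℕ)).filter (fun u => wdeg n lam u = wdeg n lam a) = {a} := by
    ext x
    simp only [Finset.mem_filter, Finset.mem_insert, Finset.mem_singleton]
    constructor
    · rintro ⟨rfl | rfl, h'⟩
      · rfl
      · omega
    · rintro rfl; simp
  rw [hf, Finset.sum_singleton, coeff_sub, coeff_monomial, coeff_monomial]
  simp [hab.symm]

/-- For a parcycle `(C_n, Π)` with sink `V_k` and a weight vector
`λ ∈ ℕ^n` with `λ · b_{V_i} > 0` for `i = 1, …, k-1`, the `λ`-initial ideal of the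
toppling ideal equals the `G`-parking function ideal: `in_λ(I_Π) = M_Π`. -/
theorem statement_7 (K : Type*) [Field K] (n k : ℕ) [NeZero n] (hn : 3 ≤ n) (hk : 1 ≤ k)
    (V : Fin k → Set (Fin n))
    (hcover : ∀ x : Fin n, ∃ j, x ∈ V j)
    (hdisj : ∀ j₁ j₂ : Fin k, j₁ ≠ j₂ → Disjoint (V j₁) (V j₂))
    (hconn : ∀ j, ((cycleG n).induce (V j)).Connected)
    (hsink : (⟨n - 1, by omega⟩ : Fin n) ∈ V ⟨k - 1, by omega⟩)
    (lam : Fin n → ℕ)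
    (hlam : ∀ j : Fin k, (j : ℕ) < k - 1 → 0 < ∑ l, (lam l : ℤ) * bPart n (V j) l) :
    initIdeal n K lam (topplingPar n k K V)
      = gparkIdeal n k K V ⟨k - 1, by omega⟩ := by
  classical
  set s : Fin k := ⟨k - 1, by omega⟩ with hs
  have hlam' : ∀ j : Fin k, j ≠ s → 0 < ∑ l, (lam l : ℤ) * bPart n (V j) l := by
    intro j hj
    apply hlam
    have : (j : ℕ) ≠ k - 1 := fun h => hj (Fin.ext h)
    omega
  choose p hp0 using hcover
  have hp : ∀ i j, i ∈ V j ↔ p i = j := by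
    intro i j
    constructor
    · intro h
      by_contra hne
      exact Set.disjoint_left.1 (hdisj _ _ hne) (hp0 i) h
    · rintro rfl; exact hp0 i
  apply le_antisymm
  · unfold initIdeal
    rw [Ideal.span_le]
    rintro _ ⟨f, hf, -, rfl⟩
    refine Ideal.sum_mem _ fun u hu => ?_
    rw [Finset.mem_filter] at hu
    obtain ⟨v, hv, hvu, hvL⟩ := aux_other n K _ f hf u hu.1
    have hmon : (monomial u (coeff u f) : MvPolynomial (Fin n) K)
        = C (coeff u f) * monomial u 1 := by simp [C_mul_monomial]
    rw [hmon]
    refine Ideal.mul_mem_left _ _ (aux_claim K n k hn V s p hp hconn lam hlam' u v hvu hvL ?_)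
    rw [hu.2]
    exact Finset.le_sup hv
  · unfold gparkIdeal
    rw [Ideal.span_le]
    rintro _ ⟨S, ⟨⟨T, rfl⟩, hSc⟩, hS, rfl⟩
    set S : Set (Fin n) := ⋃ j ∈ T, V j with hSdef
    have hmem : ∀ i, i ∈ S ↔ p i ∈ T := by
      intro i; simp [hSdef, hp]
    have hsT : s ∉ T := fun h => hS (Set.subset_biUnion_of_mem h)
    have hb : ∀ i, bPart n S i = ∑ j, (if j ∈ T then (1 : ℤ) else 0) * bPart n (V j) i := by
      intro i
      rw [aux_comb n k hn V p hp (fun j => if j ∈ T then (1 : ℤ) else 0), aux_bPart,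
        aux_lapsum n hn]
      simp only [hmem]
    have hpos : 0 < ∑ l, (lam l : ℤ) * bPart n S l := by
      have e : ∑ l, (lam l : ℤ) * bPart n S l
          = ∑ j, (if j ∈ T then (1 : ℤ) else 0) * ∑ l, (lam l : ℤ) * bPart n (V j) l := by
        simp only [hb, Finset.mul_sum]
        rw [Finset.sum_comm]
        refine Finset.sum_congr rfl fun j _ => Finset.sum_congr rfl fun l _ => by ring
      rw [e]
      have hT : ∃ j, j ∈ T := by
        obtain ⟨⟨x, hx⟩⟩ := hSc.nonempty
        exact ⟨_, (hmem x).1 hx⟩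
      obtain ⟨j, hj⟩ := hT
      have hne : ∀ j ∈ T, j ≠ s := fun j hj h => hsT (h ▸ hj)
      apply Finset.sum_pos'
      · intro j _
        split_ifs with h
        · rw [one_mul]; exact (hlam' j (hne j h)).le
        · simp
      · exact ⟨j, Finset.mem_univ _, by simpa [hj] using hlam' j (hne j hj)⟩
    refine Ideal.subset_span ⟨outMono n K S - outMono n K Sᶜ, ?_, ?_, ?_⟩
    · refine Ideal.subset_span ⟨outVec n S, outVec n Sᶜ, ?_, rfl⟩
      rw [Submodule.mem_span_range_iff_exists_fun]
      refine ⟨fun j => if j ∈ T then 1 else 0, ?_⟩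
      ext i
      have h1 := hb i
      rw [aux_out n hn] at h1
      simp only [Finset.sum_apply, Pi.smul_apply, smul_eq_mul, Pi.sub_apply]
      exact h1.symm
    all_goals
      have hw : wdeg n lam (Finsupp.equivFunOnFinite.symm (outVec n Sᶜ))
          < wdeg n lam (Finsupp.equivFunOnFinite.symm (outVec n S)) := by
        have h1 := aux_wdeg n lam (Finsupp.equivFunOnFinite.symm (outVec n S))
          (Finsupp.equivFunOnFinite.symm (outVec n Sᶜ))
        simp only [Finsupp.coe_equivFunOnFinite_symm, ← aux_out n hn] at h1
        omega
      unfold outMono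
      rw [aux_mono, aux_mono]
    · intro h
      rw [sub_eq_zero, monomial_left_inj one_ne_zero] at h
      rw [h] at hw
      exact lt_irrefl _ hw
    · rw [aux_init K n lam _ _ hw]
end
end
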